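/- arXiv:0904.1337 — 7 statements merged into one kernel-verified Lean document; each statement's English description precedes it below -/
import Mathlib

section
/- For every s ∈ ℂ and every real y > 4, |K_s(y)| ≤ e^{−y/2}·K_{Re(s)}(2). -/
open MeasureTheory

/-- The K-Bessel function `K_s(y) = (1/2) ∫_0^∞ e^{-y(t+1/t)/2} t^s dt/t`. -/
noncomputable def KBessel (s : ℂ) (y : ℝ) : ℂ :=
  (1 / 2 : ℂ) * ∫ t in Set.Ioi (0 : ℝ), (Real.exp (-(y * (t + 1 / t)) / 2) : ℂ) * (t : ℂ) ^ (s - 1)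

/-!
Since `t + 1 / t ≥ 2`, raising the argument from `x` to `y` multiplies the exponential factor
`e^{-x(t+1/t)/2}` of the integrand by at most `e^{x-y}`, while the remaining factor `t^(s-1)` has
absolute value `t^(Re s - 1)`. Hence `|K_s(y)| ≤ e^{x-y} K_{Re s}(x)` for `0 < x ≤ y`; take `x = 2`
and observe that `2 - y ≤ -y / 2` as soon as `y ≥ 4`.
-/

open Asymptotics Filter Set Topology

/-- The exponential factor `e^{-y(t+1/t)/2}` of the integrand of `KBessel`, as a real function of
`t`. The Mellin transform of `besselKernel y` at `s` is `2 K_s(y)`. -/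
noncomputable def besselKernel (y t : ℝ) : ℝ :=
  Real.exp (-(y * (t + 1 / t)) / 2)

theorem besselKernel_pos (y t : ℝ) : 0 < besselKernel y t :=
  Real.exp_pos _

theorem besselKernel_eq_mul (y t : ℝ) :
    besselKernel y t = Real.exp (-(y / 2) * t) * Real.exp (-(y / 2) * t⁻¹) := by
  rw [besselKernel, ← Real.exp_add]
  ring_nf

theorem two_le_add_one_div {𝕜 : Type*} [Field 𝕜] [LinearOrder 𝕜] [IsStrictOrderedRing 𝕜] {t : 𝕜}
    (ht : 0 < t) : 2 ≤ t + 1 / t := by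
  have sub_two_eq : t + 1 / t - 2 = (t - 1) ^ 2 / t := by field_simp; ring
  have : 0 ≤ (t - 1) ^ 2 / t := by positivity
  linarith

theorem besselKernel_le_exp_sub_mul {x y t : ℝ} (hxy : x ≤ y) (ht : 0 < t) :
    besselKernel y t ≤ Real.exp (x - y) * besselKernel x t := by
  rw [besselKernel, besselKernel, ← Real.exp_add, Real.exp_le_exp]
  linarith [mul_le_mul_of_nonneg_left (two_le_add_one_div ht) (sub_nonneg.2 hxy)]

theorem besselKernel_isBigO_atTop {y : ℝ} (hy : 0 < y) :
    besselKernel y =O[atTop] fun t => Real.exp (-(y / 2) * t) := by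
  refine .of_norm_eventuallyLE ?_
  filter_upwards [eventually_gt_atTop 0] with t ht
  have exp_inv_le_one : Real.exp (-(y / 2) * t⁻¹) ≤ 1 :=
    Real.exp_le_one_iff.2 (by rw [neg_mul, neg_nonpos]; positivity)
  rw [Real.norm_of_nonneg (besselKernel_pos y t).le, besselKernel_eq_mul]
  exact mul_le_of_le_one_right (Real.exp_nonneg _) exp_inv_le_one

theorem besselKernel_isBigO_rpow_nhdsGT_zero {y : ℝ} (hy : 0 < y) (b : ℝ) :
    besselKernel y =O[𝓝[>] 0] fun t => t ^ b := by
  have kernel_le : besselKernel y =O[𝓝[>] 0] fun t => Real.exp (-(y / 2) * t⁻¹) := by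
    refine .of_norm_eventuallyLE ?_
    filter_upwards [self_mem_nhdsWithin] with t (ht : 0 < t)
    have exp_le_one : Real.exp (-(y / 2) * t) ≤ 1 :=
      Real.exp_le_one_iff.2 (by rw [neg_mul, neg_nonpos]; positivity)
    rw [Real.norm_of_nonneg (besselKernel_pos y t).le, besselKernel_eq_mul]
    exact mul_le_of_le_one_left (Real.exp_nonneg _) exp_le_one
  have exp_inv_decay :
      (fun t : ℝ => Real.exp (-(y / 2) * t⁻¹)) =O[𝓝[>] 0] fun t => t⁻¹ ^ (-b) :=
    (isLittleO_exp_neg_mul_rpow_atTop (half_pos hy) (-b)).isBigO.comp_tendsto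
      tendsto_inv_nhdsGT_zero
  refine (kernel_le.trans exp_inv_decay).congr' .rfl ?_
  filter_upwards [self_mem_nhdsWithin] with t (ht : 0 < t)
  rw [Real.inv_rpow ht.le, Real.rpow_neg ht.le, inv_inv]

theorem mellinConvergent_besselKernel {y : ℝ} (hy : 0 < y) (s : ℂ) :
    MellinConvergent (fun t => (besselKernel y t : ℂ)) s := by
  have kernel_continuousOn : ContinuousOn (fun t => (besselKernel y t : ℂ)) (Ioi 0) := by
    unfold besselKernel
    have : ContinuousOn (fun t : ℝ => 1 / t) (Ioi 0) :=
      continuousOn_const.div continuousOn_id fun t ht => ne_of_gt ht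
    fun_prop
  exact mellinConvergent_of_isBigO_rpow_exp (half_pos hy)
    (kernel_continuousOn.locallyIntegrableOn measurableSet_Ioi)
    (Complex.isBigO_ofReal_left.2 (besselKernel_isBigO_atTop hy))
    (Complex.isBigO_ofReal_left.2 (besselKernel_isBigO_rpow_nhdsGT_zero hy _)) (sub_one_lt s.re)

theorem norm_besselKernel_mul_cpow (s : ℂ) (y : ℝ) {t : ℝ} (ht : 0 < t) :
    ‖(besselKernel y t : ℂ) * (t : ℂ) ^ (s - 1)‖ = besselKernel y t * t ^ (s.re - 1) := by
  rw [norm_mul, Complex.norm_of_nonneg (besselKernel_pos y t).le,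
    Complex.norm_cpow_eq_rpow_re_of_pos ht, Complex.sub_re, Complex.one_re]

theorem integrableOn_besselKernel_mul_rpow {y : ℝ} (hy : 0 < y) (r : ℝ) :
    IntegrableOn (fun t => besselKernel y t * t ^ (r - 1)) (Ioi 0) := by
  refine IntegrableOn.congr_fun (mellinConvergent_besselKernel hy r).norm (fun t ht => ?_)
    measurableSet_Ioi
  rw [smul_eq_mul, mul_comm, norm_besselKernel_mul_cpow r y ht, Complex.ofReal_re]

theorem KBessel_ofReal (r y : ℝ) :
    KBessel r y = ((1 / 2 * ∫ t in Ioi 0, besselKernel y t * t ^ (r - 1) : ℝ) : ℂ) := by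
  rw [KBessel, Complex.ofReal_mul, ← integral_complex_ofReal]
  congr 1
  · norm_num
  · refine setIntegral_congr_fun measurableSet_Ioi fun t (ht : 0 < t) => ?_
    simp only [besselKernel, Complex.ofReal_mul, Complex.ofReal_cpow ht.le, Complex.ofReal_sub,
      Complex.ofReal_one]

theorem norm_KBessel_ofReal (r y : ℝ) :
    ‖KBessel r y‖ = 1 / 2 * ∫ t in Ioi 0, besselKernel y t * t ^ (r - 1) := by
  rw [KBessel_ofReal, Complex.norm_of_nonneg]
  refine mul_nonneg one_half_pos.le (setIntegral_nonneg measurableSet_Ioi fun t (ht : 0 < t) => ?_)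
  exact mul_nonneg (besselKernel_pos y t).le (Real.rpow_nonneg ht.le _)

theorem abs_KBessel_le_general (s : ℂ) {x y : ℝ} (hx : 0 < x) (hxy : x ≤ y) :
    ‖KBessel s y‖ ≤ Real.exp (x - y) * ‖KBessel (s.re : ℂ) x‖ := by
  have integrand_le : ∀ᵐ t ∂volume.restrict (Ioi (0 : ℝ)),
      ‖(besselKernel y t : ℂ) * (t : ℂ) ^ (s - 1)‖ ≤
        Real.exp (x - y) * (besselKernel x t * t ^ (s.re - 1)) := by
    filter_upwards [ae_restrict_mem measurableSet_Ioi] with t (ht : 0 < t)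
    rw [norm_besselKernel_mul_cpow s y ht, ← mul_assoc]
    gcongr
    exact besselKernel_le_exp_sub_mul hxy ht
  calc ‖KBessel s y‖
      = 1 / 2 * ‖∫ t in Ioi (0 : ℝ), (besselKernel y t : ℂ) * (t : ℂ) ^ (s - 1)‖ := by
        simp [KBessel, besselKernel]
    _ ≤ 1 / 2 * ∫ t in Ioi (0 : ℝ),
          Real.exp (x - y) * (besselKernel x t * t ^ (s.re - 1)) := by
        gcongr
        exact norm_integral_le_of_norm_le
          ((integrableOn_besselKernel_mul_rpow hx s.re).const_mul _) integrand_le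
    _ = Real.exp (x - y) * ‖KBessel (s.re : ℂ) x‖ := by
        rw [norm_KBessel_ofReal, integral_const_mul, mul_left_comm]

/-- For every `s ∈ ℂ` and every real `y > 4`, `|K_s(y)| ≤ e^{-y/2} · K_{Re(s)}(2)`
(note that `K_ν(2)` is a positive real number for real `ν`, so it equals its absolute value). -/
theorem abs_KBessel_le (s : ℂ) (y : ℝ) (hy : 4 < y) :
    ‖KBessel s y‖ ≤ Real.exp (-y / 2) * ‖KBessel (s.re : ℂ) 2‖ :=
  (abs_KBessel_le_general s two_pos (by linarith)).trans (by gcongr; linarith)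
end

section
/- For every s ∈ ℂ with s ≠ 0 and s ≠ 1, the rank-two non-abelian zeta function of ℚ satisfies the functional equation ξ_{ℚ,2}(1−s) = ξ_{ℚ,2}(s). -/
/-- The rank-two non-abelian zeta function of `ℚ`:
`ξ_{ℚ,2}(s) = ξ(2s)/(s-1) − ξ(2s-1)/s`, where `ξ` is the completed Riemann zeta function. -/
noncomputable def xiQ2 (s : ℂ) : ℂ :=
  completedRiemannZeta (2 * s) / (s - 1) - completedRiemannZeta (2 * s - 1) / s

theorem apply_two_mul_one_sub {R α : Type*} [Ring R] {f : R → α}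
    (hf : ∀ z, f (1 - z) = f z) (s : R) : f (2 * (1 - s)) = f (2 * s - 1) := by
  have reflect : 1 - (2 * s - 1) = 2 * (1 - s) := by noncomm_ring
  rw [← reflect, hf]

theorem apply_two_mul_one_sub_sub_one {R α : Type*} [Ring R] {f : R → α}
    (hf : ∀ z, f (1 - z) = f z) (s : R) : f (2 * (1 - s) - 1) = f (2 * s) := by
  rw [← apply_two_mul_one_sub hf, sub_sub_cancel]

/-- Functional equation of the rank-two non-abelian zeta function of `ℚ`:
for `s ≠ 0, 1` one has `ξ_{ℚ,2}(1 − s) = ξ_{ℚ,2}(s)`. -/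
theorem xiQ2_one_sub (s : ℂ) (hs0 : s ≠ 0) (hs1 : s ≠ 1) : xiQ2 (1 - s) = xiQ2 s := by
  calc
    xiQ2 (1 - s)
      = completedRiemannZeta (2 * s - 1) / (1 - s - 1) -
          completedRiemannZeta (2 * s) / (1 - s) := by
        rw [xiQ2, apply_two_mul_one_sub completedRiemannZeta_one_sub,
          apply_two_mul_one_sub_sub_one completedRiemannZeta_one_sub]
    _ = -(completedRiemannZeta (2 * s - 1) / s) + completedRiemannZeta (2 * s) / (s - 1) := by
        rw [sub_sub_cancel_left, div_neg, ← neg_sub s 1, div_neg, sub_neg_eq_add]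
    _ = xiQ2 s := neg_add_eq_sub _ _
end

section
/- Let Λ be a lattice in a finite-dimensional real inner product space E, and let Λ₁, Λ₂ be subgroups of Λ. Then c(Λ₁ ∩ Λ₂) · c(Λ₁ + Λ₂) ≤ c(Λ₁) · c(Λ₂). (Equivalently, in the paper's notation, Vol(Λ₁/(Λ₁∩Λ₂)) ≥ Vol((Λ₁+Λ₂)/Λ₂), where the quotients carry the metric induced by orthogonal projection, since Vol(A/B) = c(A)/c(B) for B ⊆ A.) -/
open RealInnerProductSpace

/-- The covolume of the subgroup generated by a ℤ-linearly independent family `b`, regarded as a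
full-rank lattice in its real span: the square root of the Gram determinant of `b`. -/
noncomputable def gramCovol {E : Type*} [NormedAddCommGroup E] [InnerProductSpace ℝ E]
    {n : ℕ} (b : Fin n → E) : ℝ :=
  Real.sqrt (Matrix.det (Matrix.of fun i j => ⟪b i, b j⟫))

/-!
Let `K` be the span of `Λ₁ ∩ Λ₂` and map `Λ₁ × Λ₂` into the orthogonal sum `E ⊕ E` by
`(x, y) ↦ (x + y, P_K y)`. The Gram determinant of the image of a ℤ-basis does not depend on the
basis, and it is computed in two ways.
* The exact sequence `0 → Λ₁ ∩ Λ₂ → Λ₁ × Λ₂ → Λ₁ + Λ₂ → 0`, with first map `x ↦ (-x, x)`, splits.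
  In a basis adapted to it the Gram matrix becomes block diagonal after column operations, with
  determinant `c(Λ₁ ∩ Λ₂)² c(Λ₁ + Λ₂)²`.
* In a product basis, projecting away the span `V₁` of `Λ₁` leaves `c(Λ₁)²` times the Gram
  determinant of the image of `Λ₂` under `y ↦ (P_{V₁ᗮ} y, P_K y)`. Since `K ≤ V₁` this map is a
  contraction, and contractions do not increase Gram determinants, as one sees by writing these as
  products of squared heights.
-/

open Matrix Module
open scoped ComplexOrder InnerProductSpace

section Gram

variable {𝕜 E F ι κ : Type*} [RCLike 𝕜]
  [NormedAddCommGroup E] [InnerProductSpace 𝕜 E] [NormedAddCommGroup F] [InnerProductSpace 𝕜 F]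

theorem norm_sub_starProjection_le (K : Submodule 𝕜 E) [K.HasOrthogonalProjection] (x : E) {y : E}
    (hy : y ∈ K) : ‖x - K.starProjection x‖ ≤ ‖x - y‖ := by
  rw [K.starProjection_minimal]
  exact ciInf_le ⟨0, Set.forall_mem_range.2 fun _ ↦ norm_nonneg _⟩ (⟨y, hy⟩ : K)

theorem norm_map_sub_starProjection_le (f : E →ₗ[𝕜] F) (hf : ∀ x, ‖f x‖ ≤ ‖x‖) (K : Submodule 𝕜 E)
    (L : Submodule 𝕜 F) [K.HasOrthogonalProjection] [L.HasOrthogonalProjection]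
    (hKL : K.map f ≤ L) (x : E) :
    ‖f x - L.starProjection (f x)‖ ≤ ‖x - K.starProjection x‖ :=
  calc ‖f x - L.starProjection (f x)‖ ≤ ‖f x - f (K.starProjection x)‖ :=
        norm_sub_starProjection_le L _
          (hKL (Submodule.mem_map_of_mem (K.starProjection_apply_mem x)))
    _ ≤ ‖x - K.starProjection x‖ := by rw [← map_sub]; exact hf _

instance hasOrthogonalProjection_span_range [Finite ι] (v : ι → E) :
    (Submodule.span 𝕜 (Set.range v)).HasOrthogonalProjection :=
  have := FiniteDimensional.span_of_finite 𝕜 (Set.finite_range v)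
  inferInstance

variable [Fintype ι]

theorem gram_sum_smul (v : ι → E) (A : Matrix ι κ 𝕜) :
    gram 𝕜 (fun j ↦ ∑ i, A i j • v i) = Aᴴ * gram 𝕜 v * A := by
  ext j k
  rw [Matrix.mul_assoc]
  exact (star_dotProduct_gram_mulVec v (A.col j) (A.col k)).symm

variable [DecidableEq ι] [Fintype κ] [DecidableEq κ]

theorem det_gram_comp_equiv (e : κ ≃ ι) (v : ι → E) :
    (gram 𝕜 (v ∘ e)).det = (gram 𝕜 v).det :=
  det_submatrix_equiv_self e (gram 𝕜 v)

theorem det_gram_sumElim_of_inner_eq_zero {u : ι → E} {w : κ → E}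
    (h : ∀ i j, ⟪u i, w j⟫_𝕜 = 0) :
    (gram 𝕜 (Sum.elim u w)).det = (gram 𝕜 u).det * (gram 𝕜 w).det := by
  have hblocks : gram 𝕜 (Sum.elim u w) = fromBlocks (gram 𝕜 u) 0 0 (gram 𝕜 w) := by
    ext (i | i) (j | j) <;> simp [h, inner_eq_zero_symm.1 (h _ _)]
  rw [hblocks, det_fromBlocks_zero₂₁]

theorem det_gram_sumElim_add_of_mem_span {u : ι → E} {r : κ → E} (w : κ → E)
    (hr : ∀ j, r j ∈ Submodule.span 𝕜 (Set.range u)) :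
    (gram 𝕜 (Sum.elim u (r + w))).det = (gram 𝕜 (Sum.elim u w)).det := by
  choose c hc using fun j ↦ (Submodule.mem_span_range_iff_exists_fun 𝕜).1 (hr j)
  let A : Matrix (ι ⊕ κ) (ι ⊕ κ) 𝕜 := fromBlocks 1 (of c)ᵀ 0 1
  have hA : A.det = 1 := by simp [A]
  have hcomb : Sum.elim u (r + w) = fun j ↦ ∑ i, A i j • Sum.elim u w i := by
    ext (i | j) <;> simp [A, ← hc, one_apply, ite_smul]
  rw [hcomb, gram_sum_smul, det_mul, det_mul, det_conjTranspose, hA, star_one, one_mul, mul_one]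

theorem det_gram_succ {n : ℕ} (v : Fin (n + 1) → E) :
    (gram 𝕜 v).det = (gram 𝕜 (Fin.tail v)).det *
      (‖v 0 - (Submodule.span 𝕜 (Set.range (Fin.tail v))).starProjection (v 0)‖ : 𝕜) ^ 2 := by
  let K := Submodule.span 𝕜 (Set.range (Fin.tail v))
  let r : Unit → E := fun _ ↦ K.starProjection (v 0)
  let w : Unit → E := fun _ ↦ v 0 - K.starProjection (v 0)
  let e : Fin n ⊕ Unit ≃ Fin (n + 1) :=
    (Equiv.optionEquivSumPUnit (Fin n)).symm.trans (finSuccEquiv n).symm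
  have hv : Sum.elim (Fin.tail v) (r + w) = v ∘ e := by
    ext (i | i) <;> simp [r, w, e, Fin.tail]
  have horth (i : Fin n) (j : Unit) : ⟪Fin.tail v i, w j⟫_𝕜 = 0 :=
    (K.mem_orthogonal _).1 (K.sub_starProjection_mem_orthogonal _) _
      (Submodule.subset_span ⟨i, rfl⟩)
  have hw : (gram 𝕜 w).det = (‖v 0 - K.starProjection (v 0)‖ : 𝕜) ^ 2 := by
    simp only [det_unique, gram_apply, inner_self_eq_norm_sq_to_K, w]
  rw [← det_gram_comp_equiv e, ← hv,
    det_gram_sumElim_add_of_mem_span w fun _ ↦ K.starProjection_apply_mem _,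
    det_gram_sumElim_of_inner_eq_zero horth, hw]

theorem det_gram_comp_le (f : E →ₗ[𝕜] F) (hf : ∀ x, ‖f x‖ ≤ ‖x‖) (v : ι → E) :
    (gram 𝕜 (f ∘ v)).det ≤ (gram 𝕜 v).det := by
  suffices hfin : ∀ (n : ℕ) (w : Fin n → E), (gram 𝕜 (f ∘ w)).det ≤ (gram 𝕜 w).det by
    simpa only [← Function.comp_assoc, det_gram_comp_equiv] using
      hfin _ (v ∘ (Fintype.equivFin ι).symm)
  intro n
  induction n with
  | zero => simp
  | succ n ih =>
    intro w
    have hbase : (gram 𝕜 (Fin.tail (f ∘ w))).det ≤ (gram 𝕜 (Fin.tail w)).det := ih _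
    have hheight := norm_map_sub_starProjection_le f hf
      (Submodule.span 𝕜 (Set.range (Fin.tail w))) (Submodule.span 𝕜 (Set.range (Fin.tail (f ∘ w))))
      (by rw [Submodule.map_span, ← Set.range_comp]; rfl) (w 0)
    rw [det_gram_succ, det_gram_succ]
    gcongr
    · exact (posSemidef_gram 𝕜 _).det_nonneg
    · exact RCLike.ofReal_le_ofReal.2 hheight

end Gram

section Basis

variable {𝕜 E M ι κ : Type*} [RCLike 𝕜] [NormedAddCommGroup E] [InnerProductSpace 𝕜 E]
  [AddCommGroup M] [Fintype ι] [DecidableEq ι] [Fintype κ] [DecidableEq κ]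

theorem det_gram_comp_basis_eq (f : M →+ E) (b : Basis ι ℤ M) (c : Basis κ ℤ M) :
    (gram 𝕜 (f ∘ b)).det = (gram 𝕜 (f ∘ c)).det := by
  let c' : Basis ι ℤ M := c.reindex (c.indexEquiv b)
  let A : Matrix ι ι ℤ := b.toMatrix c'
  have hA : IsUnit A.det :=
    .of_mul_eq_one (c'.toMatrix b).det (by rw [← det_mul, b.toMatrix_mul_toMatrix_flip, det_one])
  have hdet : star (A.map (Int.cast : ℤ → 𝕜)).det * (A.map (Int.cast : ℤ → 𝕜)).det = 1 := by
    have hcast : (A.map (Int.cast : ℤ → 𝕜)).det = A.det := (Int.cast_det A).symm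
    rw [hcast, star_intCast]
    rcases Int.isUnit_iff.1 hA with h | h <;> simp [h]
  have hcomb : f ∘ c' = fun j ↦ ∑ i, A.map (Int.cast : ℤ → 𝕜) i j • (f ∘ b) i := by
    ext j
    rw [Function.comp_apply, ← b.sum_toMatrix_smul_self c' j, map_sum]
    simp [A, Int.cast_smul_eq_zsmul]
  calc (gram 𝕜 (f ∘ b)).det = (gram 𝕜 (f ∘ c')).det := by
        rw [hcomb, gram_sum_smul, det_mul, det_mul, det_conjTranspose, mul_right_comm, hdet,
          one_mul]
    _ = (gram 𝕜 (f ∘ c)).det := by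
        rw [c.coe_reindex, ← Function.comp_assoc, det_gram_comp_equiv]

end Basis

section Split

variable {R M ι κ : Type*} [Ring R] [AddCommGroup M] [Module R M] (N P : Submodule R M)

/-- The embedding `x ↦ (-x, x)`, the first map of the exact sequence
`0 → N ⊓ P → N × P → N ⊔ P → 0`. -/
def infToProd : (N ⊓ P : Submodule R M) →ₗ[R] N × P :=
  (-Submodule.inclusion inf_le_left).prod (Submodule.inclusion inf_le_right)

/-- The addition map `(x, y) ↦ x + y`, the second map of the exact sequence
`0 → N ⊓ P → N × P → N ⊔ P → 0`. -/
def prodToSup : N × P →ₗ[R] (N ⊔ P : Submodule R M) :=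
  (Submodule.inclusion le_sup_left).coprod (Submodule.inclusion le_sup_right)

theorem infToProd_injective : Function.Injective (infToProd N P) := fun _ _ h ↦
  Subtype.ext (congrArg (fun z : N × P ↦ (z.2 : M)) h)

theorem prodToSup_surjective : Function.Surjective (prodToSup N P) := by
  rintro ⟨z, hz⟩
  obtain ⟨x, hx, y, hy, rfl⟩ := Submodule.mem_sup.1 hz
  exact ⟨(⟨x, hx⟩, ⟨y, hy⟩), rfl⟩

theorem exact_infToProd_prodToSup : Function.Exact (infToProd N P) (prodToSup N P) := by
  rintro ⟨x, y⟩
  constructor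
  · intro h
    have hxy : (x : M) + y = 0 := congrArg Subtype.val h
    have hy : (y : M) ∈ N := eq_neg_of_add_eq_zero_right hxy ▸ N.neg_mem x.2
    exact ⟨⟨y, hy, y.2⟩, Prod.ext (Subtype.ext (neg_eq_of_add_eq_zero_left hxy)) rfl⟩
  · rintro ⟨z, hz⟩
    rw [← hz]
    exact Subtype.ext (neg_add_cancel (z : M))

variable {N P}

theorem exists_basis_prod_of_basis_inf_of_basis_sup
    (b : Basis ι R (N ⊓ P : Submodule R M)) (c : Basis κ R (N ⊔ P : Submodule R M)) :
    ∃ d : Basis (ι ⊕ κ) R (N × P),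
      (∀ i, d (.inl i) = infToProd N P (b i)) ∧ ∀ j, prodToSup N P (d (.inr j)) = c j := by
  have := Projective.of_basis c
  obtain ⟨s, hs⟩ := Module.projective_lifting_property _ LinearMap.id (prodToSup_surjective N P)
  obtain ⟨e, hinl, hsnd⟩ :=
    (exact_infToProd_prodToSup N P).splitSurjectiveEquiv (infToProd_injective N P) ⟨s, hs⟩
  refine ⟨(b.prod c).map e.symm, fun i ↦ ?_, fun j ↦ ?_⟩
  · simp [Basis.prod_apply, hinl]
  · simp [Basis.prod_apply, hsnd]

theorem exists_basis_coe_eq {v : ι → M} (hv : LinearIndependent R v)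
    (hN : Submodule.span R (Set.range v) = N) : ∃ b : Basis ι R N, ∀ i, (b i : M) = v i := by
  subst hN
  exact ⟨.span hv, fun i ↦ congrArg Subtype.val (Basis.span_apply hv i)⟩

end Split

section Shear

variable {𝕜 E ι κ : Type*} [RCLike 𝕜] [NormedAddCommGroup E] [InnerProductSpace 𝕜 E]

/-- The linear map `(x, y) ↦ (x + y, P y)` into the orthogonal sum `E ⊕ E`, where `P` is the
orthogonal projection onto `K`. For `K` the span of `Λ₁ ⊓ Λ₂` it sends the copy
`{(-x, x)}` of `Λ₁ ⊓ Λ₂` isometrically into the second summand, so that the Gram determinant of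
the image of `Λ₁ × Λ₂` becomes that of `Λ₁ ⊓ Λ₂` times that of `Λ₁ ⊔ Λ₂`. -/
noncomputable def addProj (K : Submodule 𝕜 E) [K.HasOrthogonalProjection] :
    E × E →ₗ[𝕜] WithLp 2 (E × E) :=
  (WithLp.linearEquiv 2 𝕜 (E × E)).symm ∘ₗ
    (LinearMap.fst 𝕜 E E + LinearMap.snd 𝕜 E E).prod
      (K.starProjection.toLinearMap ∘ₗ LinearMap.snd 𝕜 E E)

theorem addProj_apply (K : Submodule 𝕜 E) [K.HasOrthogonalProjection] (z : E × E) :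
    addProj K z = WithLp.toLp 2 (z.1 + z.2, K.starProjection z.2) :=
  rfl

theorem norm_toLp_starProjection_orthogonal_starProjection_le {K L : Submodule 𝕜 E}
    [K.HasOrthogonalProjection] [L.HasOrthogonalProjection] (hKL : K ≤ L) (x : E) :
    ‖WithLp.toLp 2 (Lᗮ.starProjection x, K.starProjection x)‖ ≤ ‖x‖ := by
  have hproj : ‖K.starProjection x‖ ≤ ‖L.starProjection x‖ := by
    rw [← Submodule.starProjection_comp_starProjection_of_le hKL]
    exact K.norm_starProjection_apply_le _
  refine (sq_le_sq₀ (norm_nonneg _) (norm_nonneg x)).1 ?_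
  calc ‖WithLp.toLp 2 (Lᗮ.starProjection x, K.starProjection x)‖ ^ 2
      = ‖K.starProjection x‖ ^ 2 + ‖Lᗮ.starProjection x‖ ^ 2 := by
        rw [WithLp.prod_norm_sq_eq_of_L2, WithLp.toLp_fst, WithLp.toLp_snd, add_comm]
    _ ≤ ‖L.starProjection x‖ ^ 2 + ‖Lᗮ.starProjection x‖ ^ 2 := by gcongr
    _ = ‖x‖ ^ 2 := (Submodule.norm_sq_eq_add_norm_sq_starProjection x L).symm

theorem coe_mem_span_range_coe_basis {N : Submodule ℤ E} (b : Basis ι ℤ N) (x : N) :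
    (x : E) ∈ Submodule.span 𝕜 (Set.range fun i ↦ (b i : E)) := by
  have hx : (x : E) ∈ Submodule.span ℤ (Set.range (N.subtype ∘ b)) := by
    rw [Set.range_comp]
    exact Submodule.apply_mem_span_image_of_mem_span N.subtype (b.mem_span x)
  exact Submodule.span_le_restrictScalars ℤ 𝕜 _ hx

variable [Fintype ι] [DecidableEq ι] [Fintype κ] [DecidableEq κ]

theorem det_gram_addProj_inl_inr_le (u : ι → E) (v : κ → E) (K : Submodule 𝕜 E)
    [K.HasOrthogonalProjection] (hK : K ≤ Submodule.span 𝕜 (Set.range u)) :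
    (gram 𝕜 (Sum.elim (fun i ↦ addProj K (u i, 0)) fun j ↦ addProj K (0, v j))).det ≤
      (gram 𝕜 u).det * (gram 𝕜 v).det := by
  set L := Submodule.span 𝕜 (Set.range u)
  let inl : E →ₗ[𝕜] WithLp 2 (E × E) :=
    (WithLp.linearEquiv 2 𝕜 (E × E)).symm ∘ₗ LinearMap.inl 𝕜 E E
  let f : E →ₗ[𝕜] WithLp 2 (E × E) := (WithLp.linearEquiv 2 𝕜 (E × E)).symm ∘ₗ
    (Lᗮ.starProjection.toLinearMap.prod K.starProjection.toLinearMap)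
  have hinl : (fun i ↦ addProj K (u i, 0)) = inl ∘ u := by
    ext i : 1; simp [inl, addProj_apply]
  have hsplit : (fun j ↦ addProj K (0, v j)) = (fun j ↦ inl (L.starProjection (v j))) + f ∘ v := by
    ext j : 1
    simp [inl, f, addProj_apply, ← WithLp.toLp_add]
  have hspan (j : κ) : inl (L.starProjection (v j)) ∈ Submodule.span 𝕜 (Set.range (inl ∘ u)) := by
    rw [Set.range_comp]
    exact Submodule.apply_mem_span_image_of_mem_span inl (L.starProjection_apply_mem _)
  have horth (i : ι) (j : κ) : ⟪(inl ∘ u) i, (f ∘ v) j⟫_𝕜 = 0 := by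
    have : ⟪u i, Lᗮ.starProjection (v j)⟫_𝕜 = 0 :=
      (L.mem_orthogonal _).1 (Lᗮ.starProjection_apply_mem _) _ (Submodule.subset_span ⟨i, rfl⟩)
    simpa [inl, f]
  have hgram : gram 𝕜 (inl ∘ u) = gram 𝕜 u := by ext; simp [inl]
  rw [hinl, hsplit, det_gram_sumElim_add_of_mem_span _ hspan,
    det_gram_sumElim_of_inner_eq_zero horth, hgram]
  gcongr
  · exact (posSemidef_gram 𝕜 u).det_nonneg
  · exact det_gram_comp_le f (norm_toLp_starProjection_orthogonal_starProjection_le hK) v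

theorem det_gram_addProj_neg_eq (u : ι → E) (z : κ → E × E) :
    (gram 𝕜 (Sum.elim (fun i ↦ addProj (Submodule.span 𝕜 (Set.range u)) (-u i, u i))
      fun j ↦ addProj (Submodule.span 𝕜 (Set.range u)) (z j))).det =
      (gram 𝕜 u).det * (gram 𝕜 fun j ↦ (z j).1 + (z j).2).det := by
  set K := Submodule.span 𝕜 (Set.range u)
  let inl : E →ₗ[𝕜] WithLp 2 (E × E) :=
    (WithLp.linearEquiv 2 𝕜 (E × E)).symm ∘ₗ LinearMap.inl 𝕜 E E
  let inr : E →ₗ[𝕜] WithLp 2 (E × E) :=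
    (WithLp.linearEquiv 2 𝕜 (E × E)).symm ∘ₗ LinearMap.inr 𝕜 E E
  have hinr : (fun i ↦ addProj K (-u i, u i)) = inr ∘ u := by
    have hu (i : ι) : K.starProjection (u i) = u i :=
      Submodule.starProjection_eq_self_iff.2 (Submodule.subset_span ⟨i, rfl⟩)
    ext i : 1
    simp [inr, addProj_apply, hu]
  have hsplit : (fun j ↦ addProj K (z j)) =
      (fun j ↦ inr (K.starProjection (z j).2)) + fun j ↦ inl ((z j).1 + (z j).2) := by
    ext j : 1
    simp [inl, inr, addProj_apply, ← WithLp.toLp_add]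
  have hspan (j : κ) :
      inr (K.starProjection (z j).2) ∈ Submodule.span 𝕜 (Set.range (inr ∘ u)) := by
    rw [Set.range_comp]
    exact Submodule.apply_mem_span_image_of_mem_span inr (K.starProjection_apply_mem _)
  have horth (i : ι) (j : κ) : ⟪(inr ∘ u) i, inl ((z j).1 + (z j).2)⟫_𝕜 = 0 := by
    simp [inl, inr]
  have hgramr : gram 𝕜 (inr ∘ u) = gram 𝕜 u := by ext; simp [inr]
  have hgraml : gram 𝕜 (fun j ↦ inl ((z j).1 + (z j).2)) = gram 𝕜 fun j ↦ (z j).1 + (z j).2 := by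
    ext; simp [inl]
  rw [hinr, hsplit, det_gram_sumElim_add_of_mem_span _ hspan,
    det_gram_sumElim_of_inner_eq_zero horth, hgramr, hgraml]

theorem det_gram_inf_mul_det_gram_sup_le {ι₁ ι₂ : Type*} [Fintype ι₁] [DecidableEq ι₁] [Fintype ι₂]
    [DecidableEq ι₂] {Λ₁ Λ₂ : Submodule ℤ E}
    (b₁ : Basis ι₁ ℤ Λ₁) (b₂ : Basis ι₂ ℤ Λ₂) (bi : Basis ι ℤ (Λ₁ ⊓ Λ₂ : Submodule ℤ E))
    (bs : Basis κ ℤ (Λ₁ ⊔ Λ₂ : Submodule ℤ E)) :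
    (gram 𝕜 fun i ↦ (bi i : E)).det * (gram 𝕜 fun j ↦ (bs j : E)).det ≤
      (gram 𝕜 fun i ↦ (b₁ i : E)).det * (gram 𝕜 fun j ↦ (b₂ j : E)).det := by
  obtain ⟨d, hdl, hdr⟩ := exists_basis_prod_of_basis_inf_of_basis_sup bi bs
  let K := Submodule.span 𝕜 (Set.range fun i ↦ (bi i : E))
  let f : Λ₁ × Λ₂ →+ WithLp 2 (E × E) :=
    (addProj K).toAddMonoidHom.comp (Λ₁.subtype.prodMap Λ₂.subtype).toAddMonoidHom
  have hd : f ∘ d = Sum.elim (fun i ↦ addProj K (-(bi i : E), (bi i : E)))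
      fun j ↦ addProj K ((d (.inr j)).1, (d (.inr j)).2) := by
    ext (i | j) : 1
    · simp [f, hdl, infToProd]
    · simp [f]
  have hb : f ∘ b₁.prod b₂ =
      Sum.elim (fun i ↦ addProj K (b₁ i, 0)) fun j ↦ addProj K (0, b₂ j) := by
    ext (i | j) : 1 <;> simp [f]
  have hbs : (fun j ↦ (bs j : E)) = fun j ↦ ((d (.inr j)).1 : E) + (d (.inr j)).2 := by
    ext j
    rw [← hdr]
    rfl
  have hK : K ≤ Submodule.span 𝕜 (Set.range fun i ↦ (b₁ i : E)) :=
    Submodule.span_le.2 <| Set.range_subset_iff.2 fun i ↦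
      coe_mem_span_range_coe_basis b₁ ⟨bi i, (bi i).2.1⟩
  calc (gram 𝕜 fun i ↦ (bi i : E)).det * (gram 𝕜 fun j ↦ (bs j : E)).det
      = (gram 𝕜 (f ∘ d)).det := by
        rw [hd, hbs]
        exact (det_gram_addProj_neg_eq (fun i ↦ (bi i : E))
          fun j ↦ ((d (.inr j)).1, (d (.inr j)).2)).symm
    _ = (gram 𝕜 (f ∘ b₁.prod b₂)).det := det_gram_comp_basis_eq f d _
    _ ≤ (gram 𝕜 fun i ↦ (b₁ i : E)).det * (gram 𝕜 fun j ↦ (b₂ j : E)).det := by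
        rw [hb]
        exact det_gram_addProj_inl_inr_le _ _ K hK

end Shear

theorem gramCovol_mul_gramCovol {E : Type*} [NormedAddCommGroup E] [InnerProductSpace ℝ E]
    {m n : ℕ} (u : Fin m → E) (v : Fin n → E) :
    gramCovol u * gramCovol v = √((gram ℝ u).det * (gram ℝ v).det) :=
  (Real.sqrt_mul (posSemidef_gram ℝ u).det_nonneg _).symm

theorem covol_inf_mul_covol_sup_le_general {E : Type*} [NormedAddCommGroup E]
    [InnerProductSpace ℝ E] (Λ₁ Λ₂ : Submodule ℤ E) {n₁ n₂ ni ns : ℕ}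
    (b₁ : Fin n₁ → E) (hb₁ : LinearIndependent ℤ b₁)
    (hs₁ : Submodule.span ℤ (Set.range b₁) = Λ₁)
    (b₂ : Fin n₂ → E) (hb₂ : LinearIndependent ℤ b₂)
    (hs₂ : Submodule.span ℤ (Set.range b₂) = Λ₂)
    (bi : Fin ni → E) (hbi : LinearIndependent ℤ bi)
    (hsi : Submodule.span ℤ (Set.range bi) = Λ₁ ⊓ Λ₂)
    (bs : Fin ns → E) (hbs : LinearIndependent ℤ bs)
    (hss : Submodule.span ℤ (Set.range bs) = Λ₁ ⊔ Λ₂) :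
    gramCovol bi * gramCovol bs ≤ gramCovol b₁ * gramCovol b₂ := by
  obtain ⟨B₁, hB₁⟩ := exists_basis_coe_eq hb₁ hs₁
  obtain ⟨B₂, hB₂⟩ := exists_basis_coe_eq hb₂ hs₂
  obtain ⟨Bi, hBi⟩ := exists_basis_coe_eq hbi hsi
  obtain ⟨Bs, hBs⟩ := exists_basis_coe_eq hbs hss
  have h := det_gram_inf_mul_det_gram_sup_le (𝕜 := ℝ) B₁ B₂ Bi Bs
  simp only [hB₁, hB₂, hBi, hBs] at h
  simpa only [gramCovol_mul_gramCovol] using Real.sqrt_le_sqrt h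

/-- For subgroups `Λ₁, Λ₂` of a lattice `Λ` in a finite-dimensional real inner product space,
`c(Λ₁ ∩ Λ₂)·c(Λ₁ + Λ₂) ≤ c(Λ₁)·c(Λ₂)`, where the covolume `c` of a subgroup is computed from
the Gram determinant of any ℤ-basis (the empty basis giving `c(0) = 1`). -/
theorem covol_inf_mul_covol_sup_le
    (E : Type*) [NormedAddCommGroup E] [InnerProductSpace ℝ E] [FiniteDimensional ℝ E]
    (Λ : Submodule ℤ E) [DiscreteTopology Λ]
    (Λ₁ Λ₂ : Submodule ℤ E) (h₁ : Λ₁ ≤ Λ) (h₂ : Λ₂ ≤ Λ)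
    {n₁ n₂ ni ns : ℕ}
    (b₁ : Fin n₁ → E) (hb₁ : LinearIndependent ℤ b₁)
    (hs₁ : Submodule.span ℤ (Set.range b₁) = Λ₁)
    (b₂ : Fin n₂ → E) (hb₂ : LinearIndependent ℤ b₂)
    (hs₂ : Submodule.span ℤ (Set.range b₂) = Λ₂)
    (bi : Fin ni → E) (hbi : LinearIndependent ℤ bi)
    (hsi : Submodule.span ℤ (Set.range bi) = Λ₁ ⊓ Λ₂)
    (bs : Fin ns → E) (hbs : LinearIndependent ℤ bs)
    (hss : Submodule.span ℤ (Set.range bs) = Λ₁ ⊔ Λ₂) :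
    gramCovol bi * gramCovol bs ≤ gramCovol b₁ * gramCovol b₂ :=
  covol_inf_mul_covol_sup_le_general Λ₁ Λ₂ b₁ hb₁ hs₁ b₂ hb₂ hs₂ bi hbi hsi bs hbs hss
end

section
/- Let Λ be a lattice in a finite-dimensional real inner product space E. Then for every real C > 0 the set of subgroups M ≤ Λ with c(M) ≤ C is finite. Consequently, the set of Arakelov degrees { −log c(M) : M a subgroup of Λ } is a discrete subset of ℝ. -/
open RealInnerProductSpace

/-!
To a subgroup `M ≤ Λ` with ℤ-basis `b₁, …, bₙ` attach `ω = b₁ ∧ ⋯ ∧ bₙ`. It lies in the lattice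
generated by the `n`-fold wedges of vectors of `Λ`, and its norm is the covolume of `M`, so a bound
on the covolume leaves finitely many `ω`. A fixed `ω ≠ 0` determines the real span of `M`, hence the
subgroup `L = Λ ∩ span M`. If `x = ∑ tᵢ bᵢ ∈ L`, then replacing `bᵢ` by `x` in `ω` gives `tᵢ ω`, so
`tᵢ` lies in the discrete group `{t : t ω is in the lattice}`, which is `d⁻¹ℤ` for some `d`
depending only on `ω`. Therefore `d L ≤ M ≤ L`, and `L / d L` is finite.
-/

open Module Submodule Set exteriorPower
open scoped Pointwise

section IntermediateSubmodules

variable {R A : Type*} [Ring R] [AddCommGroup A] [Module R A]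

theorem finite_setOf_le_of_finite {N : Submodule R A} (hN : (N : Set A).Finite) :
    {M : Submodule R A | M ≤ N}.Finite :=
  hN.finite_subsets.preimage SetLike.coe_injective.injOn

theorem finite_Icc_of_finite_map_mkQ {N L : Submodule R A}
    (h : (L.map N.mkQ : Set (A ⧸ N)).Finite) : (Icc N L).Finite := by
  refine Finite.of_injOn (f := Submodule.map N.mkQ) (fun M hM ↦ Submodule.map_mono hM.2)
    (fun M hM M' hM' heq ↦ ?_) (finite_setOf_le_of_finite h)
  simpa [comap_map_mkQ, hM.1, hM'.1] using congrArg (Submodule.comap N.mkQ) heq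

theorem finite_map_mkQ_zsmul {L : Submodule ℤ A} (hL : L.FG) {d : ℤ} (hd : d ≠ 0) :
    (L.map (d • L).mkQ : Set (A ⧸ d • L)).Finite := by
  have hfin : Module.Finite ℤ (L.map (d • L).mkQ) := Module.Finite.iff_fg.2 (hL.map _)
  have htors : Module.IsTorsion ℤ (L.map (d • L).mkQ) := by
    rintro ⟨_, x, hx, rfl⟩
    refine ⟨⟨d, mem_nonZeroDivisors_of_ne_zero hd⟩, Subtype.ext ?_⟩
    exact (Submodule.Quotient.mk_eq_zero _).2 (smul_mem_pointwise_smul x d L hx)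
  have := Module.finite_of_fg_torsion _ htors
  exact Set.toFinite _

theorem finite_Icc_zsmul {L : Submodule ℤ A} (hL : L.FG) {d : ℤ} (hd : d ≠ 0) :
    (Icc (d • L) L).Finite :=
  finite_Icc_of_finite_map_mkQ (finite_map_mkQ_zsmul hL hd)

end IntermediateSubmodules

section Discreteness

theorem discreteTopology_of_finite_inter_Ioi {α : Type*} [LinearOrder α] [TopologicalSpace α]
    [OrderTopology α] [NoMinOrder α] {S : Set α} (hS : ∀ a, (S ∩ Ioi a).Finite) :
    DiscreteTopology S := by
  refine discreteTopology_of_noAccPts fun x _ hx ↦ ?_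
  obtain ⟨a, ha⟩ := exists_lt x
  exact Set.Infinite.of_accPt (hx.nhds_inter (Ioi_mem_nhds ha)) (inter_comm S _ ▸ hS a)

theorem discreteTopology_setOf_neg_log {ι : Type*} {s : Set ι} {c : ι → ℝ}
    (h : ∀ C, 0 < C → {i | i ∈ s ∧ c i ≤ C}.Finite) :
    DiscreteTopology {x : ℝ | ∃ i ∈ s, x = -Real.log (c i)} := by
  refine discreteTopology_of_finite_inter_Ioi fun a ↦ ?_
  refine ((h _ (Real.exp_pos (-a))).image fun i ↦ -Real.log (c i)).subset ?_
  rintro _ ⟨⟨i, hi, rfl⟩, ha⟩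
  refine ⟨i, ⟨hi, ?_⟩, rfl⟩
  obtain hci | hci := le_or_gt (c i) 0
  · exact hci.trans (Real.exp_pos _).le
  · exact (Real.log_le_iff_le_exp hci).1 (lt_neg.1 ha).le

theorem exists_int_mul_eq_intCast_of_smul_mem {V : Type*} [AddCommGroup V] [Module ℝ V]
    [TopologicalSpace V] [ContinuousSMul ℝ V] {Γ : Submodule ℤ V} [DiscreteTopology Γ] {ω : V}
    (hω : ω ≠ 0) (hωΓ : ω ∈ Γ) :
    ∃ d : ℤ, d ≠ 0 ∧ ∀ t : ℝ, t • ω ∈ Γ → ∃ k : ℤ, d * t = k := by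
  let H : AddSubgroup ℝ := Γ.toAddSubgroup.comap (LinearMap.toSpanSingleton ℝ V ω).toAddMonoidHom
  have hH : DiscreteTopology H :=
    DiscreteTopology.preimage_of_continuous_injective (Γ : Set V)
      (continuous_id.smul continuous_const) (smul_left_injective ℝ hω)
  obtain ⟨⟨a, _⟩, ha⟩ := (AddSubgroup.discrete_iff_addCyclic.2 hH).exists_generator
  have hgen : ∀ t : ℝ, t • ω ∈ Γ → ∃ k : ℤ, k * a = t := fun t ht ↦ by
    obtain ⟨k, hk⟩ := ha ⟨t, ht⟩
    exact ⟨k, by simpa using congrArg Subtype.val hk⟩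
  obtain ⟨d, hd⟩ := hgen 1 (by simpa using hωΓ)
  refine ⟨d, by rintro rfl; simp at hd, fun t ht ↦ ?_⟩
  obtain ⟨k, rfl⟩ := hgen t ht
  exact ⟨k, by linear_combination (k : ℝ) * hd⟩

variable {V : Type*} [NormedAddCommGroup V]

theorem finite_inter_of_isBounded_of_discrete [ProperSpace V] (Γ : Submodule ℤ V)
    [hΓ : DiscreteTopology Γ] {s : Set V} (hs : Bornology.IsBounded s) : (s ∩ Γ).Finite := by
  have hΓ' : DiscreteTopology Γ.toAddSubgroup := hΓ
  exact Metric.finite_isBounded_inter_isClosed (SetLike.isDiscrete_iff_discreteTopology.2 hΓ) hs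
    (AddSubgroup.isClosed_of_discrete (H := Γ.toAddSubgroup))

variable [NormedSpace ℝ V] [FiniteDimensional ℝ V]

theorem discreteTopology_span_int_range {ι : Type*} {v : ι → V} (hv : LinearIndependent ℝ v) :
    DiscreteTopology (span ℤ (range v)) := by
  let e := Basis.extend hv.linearIndepOn_id
  have hfin : Finite (hv.linearIndepOn_id.extend (subset_univ _)) := Module.Finite.finite_basis e
  have hsub : range v ⊆ range e := by
    simpa only [e, Basis.range_extend] using hv.linearIndepOn_id.subset_extend _
  have he : DiscreteTopology (span ℤ (range e)) := inferInstance
  exact DiscreteTopology.of_subset he (span_mono hsub)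

theorem linearIndependent_real_of_int {Λ : Submodule ℤ V} [DiscreteTopology Λ] {ι : Type*}
    [Finite ι] {b : ι → V} (hbΛ : ∀ i, b i ∈ Λ) (hb : LinearIndependent ℤ b) :
    LinearIndependent ℝ b := by
  have := Fintype.ofFinite ι
  have hdisc : DiscreteTopology (span ℤ (range b)) :=
    DiscreteTopology.of_subset ‹_› (span_le.2 (range_subset_iff.2 hbΛ))
  rw [linearIndependent_iff_card_le_finrank_span, Real.finrank_eq_int_finrank_of_discrete hdisc,
    Set.finrank, finrank_span_eq_card hb]

theorem exists_fin_int_basis (M : Submodule ℤ V) [DiscreteTopology M] :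
    ∃ n ≤ finrank ℝ V, ∃ b : Fin n → V, LinearIndependent ℤ b ∧ span ℤ (range b) = M := by
  let v := Module.finBasis ℤ M
  have hv : LinearIndependent ℤ (M.subtype ∘ v) := v.linearIndependent.map' _ M.ker_subtype
  refine ⟨finrank ℤ M, ?_, M.subtype ∘ v, hv, ?_⟩
  · simpa using (linearIndependent_real_of_int (fun i ↦ (v i).2) hv).fintype_card_le_finrank
  · rw [range_comp, span_image, v.span_eq, Submodule.map_top, range_subtype]

end Discreteness

section Wedge

theorem alternatingMap_update_sum_smul {R M N ι : Type*} [CommRing R] [AddCommGroup M] [Module R M]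
    [AddCommGroup N] [Module R N] [Fintype ι] [DecidableEq ι] (f : M [⋀^ι]→ₗ[R] N) (b : ι → M)
    (t : ι → R) (i : ι) : f (Function.update b i (∑ j, t j • b j)) = t i • f b := by
  rw [f.map_update_sum, Finset.sum_eq_single i]
  · simp
  · intro j _ hj
    rw [f.map_update_smul, f.map_update_self _ hj.symm, smul_zero]
  · simp

variable {K V : Type*} [Field K] [AddCommGroup V] [Module K V] {n : ℕ} {b b' : Fin n → V}

theorem ιMulti_ne_zero_iff_linearIndependent : ιMulti K n b ≠ 0 ↔ LinearIndependent K b := by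
  refine ⟨fun h ↦ by_contra fun hb ↦ h ((ιMulti K n).map_linearDependent b hb), fun hb ↦ ?_⟩
  have hfamily := (ιMulti_family_linearIndependent_field (n := n) hb).ne_zero
    (Set.powersetCard.ofFinEmbEquiv (RelEmbedding.refl _))
  simpa [ιMulti_family] using hfamily

theorem mem_span_range_iff_ι_mul_ιMulti_eq_zero (hb : LinearIndependent K b) {x : V} :
    x ∈ span K (range b) ↔ ExteriorAlgebra.ι K x * ιMulti K n b = 0 := by
  have hcons : ExteriorAlgebra.ι K x * ιMulti K n b =
      ιMulti K (n + 1) (Fin.cons x b : Fin (n + 1) → V) := by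
    simp [ExteriorAlgebra.ιMulti_succ_apply, Matrix.vecTail, Function.comp_def]
  rw [hcons, ZeroMemClass.coe_eq_zero, ← not_iff_not, ← ne_eq (ιMulti K _ _),
    ιMulti_ne_zero_iff_linearIndependent, linearIndependent_finCons, and_iff_right hb]

theorem span_range_eq_of_ιMulti_eq (hb : LinearIndependent K b)
    (h : ιMulti K n b = ιMulti K n b') : span K (range b) = span K (range b') := by
  have hb' : LinearIndependent K b' := by
    rwa [← ιMulti_ne_zero_iff_linearIndependent, ← h, ιMulti_ne_zero_iff_linearIndependent]
  ext x
  rw [mem_span_range_iff_ι_mul_ιMulti_eq_zero hb, h, mem_span_range_iff_ι_mul_ιMulti_eq_zero hb']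

end Wedge

section ExteriorLattice

variable (K : Type*) {V : Type*} [CommRing K] [AddCommGroup V] [Module K V]

/-- The wedge product of `n` vectors of a subgroup `Λ` of the `K`-module `V`, as a ℤ-alternating map
into the exterior power of `V` over `K`. -/
noncomputable def ιMultiInt (n : ℕ) (Λ : Submodule ℤ V) : Λ [⋀^Fin n]→ₗ[ℤ] ⋀[K]^n V where
  __ := ((ιMulti K n).toMultilinearMap.restrictScalars ℤ).compLinearMap fun _ ↦ Λ.subtype
  map_eq_zero_of_eq' _ _ _ hij hne :=
    (ιMulti K n).map_eq_zero_of_eq _ (congrArg Subtype.val hij) hne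

/-- The subgroup of `⋀[K]^n V` generated by the wedge products of `n` vectors of `Λ`, encoded as the
image of `⋀[ℤ]^n Λ`. It is a lattice when `K = ℝ` and `Λ` is one. -/
noncomputable def exteriorLattice (n : ℕ) (Λ : Submodule ℤ V) : Submodule ℤ (⋀[K]^n V) :=
  LinearMap.range (alternatingMapLinearEquiv (ιMultiInt K n Λ))

variable {K} {n : ℕ} {Λ : Submodule ℤ V} {b : Fin n → V}

theorem ιMulti_mem_exteriorLattice (hb : ∀ i, b i ∈ Λ) : ιMulti K n b ∈ exteriorLattice K n Λ :=
  ⟨ιMulti ℤ n fun i ↦ ⟨b i, hb i⟩, alternatingMapLinearEquiv_apply_ιMulti _ _⟩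

theorem exteriorLattice_eq_span {I : Type*} [LinearOrder I] {v : I → Λ}
    (hv : span ℤ (range v) = ⊤) :
    exteriorLattice K n Λ = span ℤ (range (ιMulti_family K n fun i ↦ (v i : V))) := by
  rw [exteriorLattice, LinearMap.range_eq_map, ← ιMulti_family_span_of_span ℤ hv,
    Submodule.map_span, ← range_comp]
  congr 2
  ext1 s
  exact alternatingMapLinearEquiv_apply_ιMulti (ιMultiInt K n Λ) _

-- Cramer's rule: each coefficient of `x` is the ratio of two wedges of vectors of `Λ`.
theorem zsmul_mem_span_int_range (hbΛ : ∀ i, b i ∈ Λ) {d : ℤ}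
    (hd : ∀ t : K, t • ιMulti K n b ∈ exteriorLattice K n Λ → ∃ k : ℤ, d * t = k) {x : V}
    (hxΛ : x ∈ Λ) (hx : x ∈ span K (range b)) : d • x ∈ span ℤ (range b) := by
  obtain ⟨t, rfl⟩ := (mem_span_range_iff_exists_fun K).1 hx
  have hint : ∀ i, ∃ k : ℤ, d * t i = k := fun i ↦ by
    refine hd _ ?_
    rw [← alternatingMap_update_sum_smul]
    refine ιMulti_mem_exteriorLattice fun j ↦ ?_
    obtain rfl | hj := eq_or_ne j i
    · simpa using hxΛ
    · simpa [hj] using hbΛ j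
  choose k hk using hint
  refine (mem_span_range_iff_exists_fun ℤ).2 ⟨k, ?_⟩
  simp only [Finset.smul_sum, ← Int.cast_smul_eq_zsmul K, ← hk, mul_smul]

end ExteriorLattice

section Covolume

variable {E : Type*} [NormedAddCommGroup E] [InnerProductSpace ℝ E] [FiniteDimensional ℝ E] {n : ℕ}

theorem norm_ιMulti_eq_gramCovol (b : Fin n → E) : ‖ιMulti ℝ n b‖ = gramCovol b := by
  rw [norm_eq_sqrt_real_inner, inner_ιMulti_self]
  rfl

variable (Λ : Submodule ℤ E) [DiscreteTopology Λ]

instance discreteTopology_exteriorLattice : DiscreteTopology (exteriorLattice ℝ n Λ) := by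
  let v := Module.finBasis ℤ Λ
  have hv : LinearIndependent ℝ fun i ↦ (v i : E) :=
    linearIndependent_real_of_int (fun i ↦ (v i).2)
      (v.linearIndependent.map' Λ.subtype Λ.ker_subtype)
  rw [exteriorLattice_eq_span v.span_eq]
  exact discreteTopology_span_int_range (ιMulti_family_linearIndependent_field n hv)

theorem finite_setOf_span_int_range_of_ιMulti_eq {ω : ⋀[ℝ]^n E} (hω : ω ≠ 0) :
    {M | ∃ b : Fin n → E, (∀ i, b i ∈ Λ) ∧ ιMulti ℝ n b = ω ∧ span ℤ (range b) = M}.Finite := by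
  obtain hempty | ⟨-, b₀, hb₀Λ, rfl, -⟩ := Set.eq_empty_or_nonempty
    {M | ∃ b : Fin n → E, (∀ i, b i ∈ Λ) ∧ ιMulti ℝ n b = ω ∧ span ℤ (range b) = M}
  · exact hempty ▸ finite_empty
  obtain ⟨d, hd0, hd⟩ :=
    exists_int_mul_eq_intCast_of_smul_mem hω (ιMulti_mem_exteriorLattice hb₀Λ)
  let L : Submodule ℤ E := Λ ⊓ (span ℝ (range b₀)).restrictScalars ℤ
  have hL : L.FG := (Module.Finite.iff_fg.1 (inferInstanceAs (Module.Finite ℤ Λ))).of_le inf_le_left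
  refine (finite_Icc_zsmul hL hd0).subset ?_
  rintro _ ⟨b, hbΛ, hb, rfl⟩
  have hspan : span ℝ (range b) = span ℝ (range b₀) :=
    span_range_eq_of_ιMulti_eq (ιMulti_ne_zero_iff_linearIndependent.1 (hb ▸ hω)) hb
  constructor
  · rintro _ ⟨x, ⟨hxΛ, hx⟩, rfl⟩
    exact zsmul_mem_span_int_range hbΛ (hb ▸ hd) hxΛ (hspan ▸ hx)
  · exact span_le.2 (range_subset_iff.2 fun i ↦ ⟨hbΛ i, hspan ▸ subset_span (mem_range_self i)⟩)

theorem finite_setOf_span_int_range_of_gramCovol_le (n : ℕ) (C : ℝ) :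
    {M | ∃ b : Fin n → E, (∀ i, b i ∈ Λ) ∧ LinearIndependent ℤ b ∧ gramCovol b ≤ C ∧
      span ℤ (range b) = M}.Finite := by
  have hwedges : (Metric.closedBall 0 C ∩ exteriorLattice ℝ n Λ : Set (⋀[ℝ]^n E)).Finite :=
    finite_inter_of_isBounded_of_discrete _ Metric.isBounded_closedBall
  refine ((hwedges.sdiff (t := {0})).biUnion fun ω hω ↦
    finite_setOf_span_int_range_of_ιMulti_eq Λ hω.2).subset ?_
  rintro M ⟨b, hbΛ, hb, hbC, hM⟩
  refine mem_biUnion (x := ιMulti ℝ n b) ⟨⟨?_, ιMulti_mem_exteriorLattice hbΛ⟩, ?_⟩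
    ⟨b, hbΛ, rfl, hM⟩
  · rwa [mem_closedBall_zero_iff, norm_ιMulti_eq_gramCovol]
  · exact ιMulti_ne_zero_iff_linearIndependent.2 (linearIndependent_real_of_int hbΛ hb)

end Covolume

/-- Let `Λ` be a lattice in a finite-dimensional real inner product space and let `c` be the
covolume function on subgroups of `Λ` (computed via Gram determinants of ℤ-bases, with
`c(0) = 1` from the empty basis). Then for every `C > 0` only finitely many subgroups `M ≤ Λ`
satisfy `c(M) ≤ C`; consequently the set of Arakelov degrees `{−log c(M) : M ≤ Λ}` is a
discrete subset of `ℝ`. -/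
theorem finiteness_of_bounded_covolume_subgroups
    (E : Type*) [NormedAddCommGroup E] [InnerProductSpace ℝ E] [FiniteDimensional ℝ E]
    (Λ : Submodule ℤ E) [DiscreteTopology Λ]
    (c : Submodule ℤ E → ℝ)
    (hc : ∀ M : Submodule ℤ E, M ≤ Λ → ∀ (n : ℕ) (b : Fin n → E), LinearIndependent ℤ b →
      Submodule.span ℤ (Set.range b) = M → c M = gramCovol b) :
    (∀ C : ℝ, 0 < C → {M : Submodule ℤ E | M ≤ Λ ∧ c M ≤ C}.Finite) ∧
    DiscreteTopology {x : ℝ | ∃ M : Submodule ℤ E, M ≤ Λ ∧ x = -Real.log (c M)} := by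
  have hfinite : ∀ C : ℝ, 0 < C → {M : Submodule ℤ E | M ≤ Λ ∧ c M ≤ C}.Finite := by
    intro C _
    refine ((finite_Iic (finrank ℝ E)).biUnion fun n _ ↦
      finite_setOf_span_int_range_of_gramCovol_le Λ n C).subset ?_
    rintro M ⟨hM, hMC⟩
    have : DiscreteTopology M := DiscreteTopology.of_subset ‹DiscreteTopology Λ› hM
    obtain ⟨n, hn, b, hb, hbM⟩ := exists_fin_int_basis M
    have hbΛ : ∀ i, b i ∈ Λ := fun i ↦ hM (hbM ▸ subset_span (mem_range_self i))
    exact mem_biUnion hn ⟨b, hbΛ, hb, hc M hM n b hb hbM ▸ hMC, hbM⟩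
  exact ⟨hfinite, discreteTopology_setOf_neg_log hfinite⟩
end

section
/- If V is a mod p representation of G_E of dimension d, then dim_E 𝔻(V) = d, and the natural E^s-linear map α_V : E^s ⊗_E 𝔻(V) → E^s ⊗_{𝔽_p} V, λ ⊗ x ↦ λ·x, is a G_E-equivariant isomorphism, where G_E acts on the source through its action on the coefficient field E^s alone and on the target diagonally. -/
open TensorProduct

/-!
Everything comes down to descent for a semilinear representation `W` of `Gal(L/K)` whose vectors
have open stabilizers, applied to `L ⊗ V` with the diagonal action.

An invariant vector in the `L`-span of an `L`-independent family of invariant vectors has invariant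
coordinates, hence coordinates in `K`. So a family of invariants that is an `L`-basis of the
`L`-span of `W^G` spans `W^G` over `K`, and `L ⊗_K W^G → W` is injective.

For surjectivity, let `w` be fixed by the automorphisms that are trivial on a finite subextension
`M`. For each `x : M` the sum of `τ x • g_τ w` over the embeddings `τ : M → L`, with `g_τ` any
extension of `τ` to `L`, is invariant. By Dedekind's independence of the embeddings, each `g_τ w`,
and in particular `w` itself, is an `L`-combination of these sums.
-/

open scoped Topology

section LinearAlgebra

variable {L W ι X : Type*} [Field L] [AddCommGroup W] [Module L W]

theorem mem_span_range_sum_smul_of_linearIndependent [Fintype ι] {χ : ι → X → L}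
    (hχ : LinearIndependent L χ) (w : ι → W) (i : ι) :
    w i ∈ Submodule.span L (Set.range fun x ↦ ∑ j, χ j x • w j) := by
  by_contra hw
  obtain ⟨f, hfw, hf⟩ := Submodule.exists_le_ker_of_notMem hw
  have f_sum_eq_zero (x : X) : f (∑ j, χ j x • w j) = 0 :=
    hf (Submodule.subset_span ⟨x, rfl⟩)
  have relation : ∑ j, f (w j) • χ j = 0 := by
    ext x
    simpa [mul_comm] using f_sum_eq_zero x
  exact hfw (Fintype.linearIndependent_iff.1 hχ _ relation i)

end LinearAlgebra

section Definitions

variable {K G W : Type*} [Semiring K] [Monoid G] [AddCommMonoid W] [Module K W]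

/-- A representation `σ` of `G` on an `L`-module is semilinear for a given action of `G` on the
ring `L`. Linearity is only bundled over `K`, typically the ring of invariants of `L`, so that the
invariants of `σ` form a `K`-module. -/
def IsSemilinearRep (L : Type*) [Semiring L] [MulSemiringAction G L] [Module L W]
    (σ : Representation K G W) : Prop :=
  ∀ (g : G) (c : L) (w : W), σ g (c • w) = (g • c) • σ g w

/-- A representation is smooth if it is continuous for the discrete topology on the module. This is
encoded by requiring each stabilizer to be a neighbourhood of `1`, which for a topological group
is equivalent to its being open. -/
def IsSmoothRep [TopologicalSpace G] (σ : Representation K G W) : Prop :=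
  ∀ w : W, ∀ᶠ g in 𝓝 1, σ g w = w

end Definitions

namespace IsSemilinearRep

section CommRing

variable {K L G W : Type*} [CommRing K] [CommRing L] [Algebra K L] [Group G]
  [MulSemiringAction G L] [AddCommGroup W] [Module K W] [Module L W]
  [IsScalarTower K L W] {σ : Representation K G W}

theorem liftBaseChange_invariants_map [SMulCommClass G K L] (hσ : IsSemilinearRep L σ) (g : G)
    (t : L ⊗[K] σ.invariants) :
    σ.invariants.subtype.liftBaseChange L
        (TensorProduct.map (Representation.ofDistribMulAction K G L g) LinearMap.id t) =
      σ g (σ.invariants.subtype.liftBaseChange L t) := by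
  induction t using TensorProduct.induction_on with
  | zero => simp only [map_zero]
  | tmul x y => simp [hσ g x y, y.2 g]
  | add t t' ht ht' => simp only [map_add, ht, ht']

theorem mem_span_of_mem_span_invariants [Algebra.IsInvariant K L G] (hσ : IsSemilinearRep L σ)
    {ι : Type*} {b : ι → W} (hb : ∀ i, b i ∈ σ.invariants) (hli : LinearIndependent L b) {w : W}
    (hw : w ∈ σ.invariants) (hwb : w ∈ Submodule.span L (Set.range b)) :
    w ∈ Submodule.span K (Set.range b) := by
  obtain ⟨c, rfl⟩ := Finsupp.mem_span_range_iff_exists_finsupp.1 hwb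
  have coeff_fixed (i : ι) (hi : i ∈ c.support) (g : G) : g • c i = c i := by
    have sum_eq : ∑ i ∈ c.support, (g • c i) • b i = ∑ i ∈ c.support, c i • b i := by
      simpa only [Finsupp.sum, map_sum, hσ g, hb _ g] using hw g
    exact linearIndependent_iff'ₛ.1 hli _ _ _ sum_eq i hi
  refine Submodule.sum_mem _ fun i hi ↦ ?_
  obtain ⟨a, ha⟩ := Algebra.IsInvariant.isInvariant (A := K) (c i) (coeff_fixed i hi)
  change c i • b i ∈ _
  rw [← ha, algebraMap_smul]
  exact Submodule.smul_mem _ a (Submodule.subset_span ⟨i, rfl⟩)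

end CommRing

section Field

variable {K L G W : Type*} [CommRing K] [Field L] [Algebra K L] [Group G] [MulSemiringAction G L]
  [Algebra.IsInvariant K L G] [AddCommGroup W] [Module K W] [Module L W] [IsScalarTower K L W]
  {σ : Representation K G W}

theorem exists_linearIndependent_span_eq_invariants (hσ : IsSemilinearRep L σ) :
    ∃ B : Set W, LinearIndependent L (Subtype.val : B → W) ∧ Submodule.span K B = σ.invariants := by
  obtain ⟨B, hB, hspan, hli⟩ := exists_linearIndependent L (σ.invariants : Set W)
  refine ⟨B, hli, le_antisymm (Submodule.span_le.2 hB) fun w hw ↦ ?_⟩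
  have hwB : w ∈ Submodule.span L B := hspan ▸ Submodule.subset_span hw
  rw [← Subtype.range_coe (s := B)] at hwB ⊢
  exact hσ.mem_span_of_mem_span_invariants (fun b ↦ hB b.2) hli hw hwB

theorem injective_liftBaseChange_invariants (hσ : IsSemilinearRep L σ) :
    Function.Injective (σ.invariants.subtype.liftBaseChange L) := by
  obtain ⟨B, hli, hspan⟩ := hσ.exists_linearIndependent_span_eq_invariants
  let b (x : B) : σ.invariants := ⟨x, hspan ▸ Submodule.subset_span x.2⟩
  have span_b : Submodule.span K (Set.range b) = ⊤ := by
    rw [Submodule.span_range_subtype_eq_top_iff, Subtype.range_coe, hspan]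
  have span_one_tmul : Submodule.span L (Set.range fun x ↦ (1 : L) ⊗ₜ[K] b x) = ⊤ := by
    rw [← Submodule.baseChange_top, ← span_b, Submodule.baseChange_span, ← Set.range_comp]
    rfl
  refine LinearMap.injective_of_linearIndependent span_one_tmul ?_
  simpa [Function.comp_def, b] using hli

end Field

end IsSemilinearRep

section Tensor

variable {k K L G V : Type*} [CommSemiring k] [CommSemiring K] [CommSemiring L] [Algebra k K]
  [Algebra k L] [Algebra K L] [IsScalarTower k K L] [Monoid G] [MulSemiringAction G L]
  [SMulCommClass G K L] [AddCommMonoid V] [Module k V]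

variable (K L) in
/-- The diagonal action `g • (c ⊗ v) = g c ⊗ g v` of `G` on `L ⊗[k] V`, as a representation over a
ring `K` of invariants of `L`. -/
noncomputable def diagonalRep (ρ : Representation k G V) : Representation K G (L ⊗[k] V) where
  toFun g := AlgebraTensorModule.map (Representation.ofDistribMulAction K G L g) (ρ g)
  map_one' := by simp only [map_one]; exact AlgebraTensorModule.map_one
  map_mul' g h := by simp only [map_mul]; exact AlgebraTensorModule.map_mul _ _ _ _

theorem diagonalRep_tmul (ρ : Representation k G V) (g : G) (x : L) (v : V) :
    diagonalRep K L ρ g (x ⊗ₜ v) = (g • x) ⊗ₜ ρ g v :=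
  rfl

theorem isSemilinearRep_diagonalRep (ρ : Representation k G V) :
    IsSemilinearRep L (diagonalRep K L ρ) := by
  intro g c w
  induction w using TensorProduct.induction_on with
  | zero => simp only [smul_zero, map_zero]
  | tmul x v => simp only [smul_tmul', smul_eq_mul, diagonalRep_tmul, smul_mul']
  | add w w' hw hw' => simp only [smul_add, map_add, hw, hw']

theorem IsSmoothRep.diagonalRep [TopologicalSpace G]
    (hL : IsSmoothRep (Representation.ofDistribMulAction K G L)) {ρ : Representation k G V}
    (hρ : IsSmoothRep ρ) : IsSmoothRep (diagonalRep K L ρ) := by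
  intro w
  induction w using TensorProduct.induction_on with
  | zero => simp only [map_zero, Filter.eventually_true]
  | tmul x v =>
    filter_upwards [hL x, hρ v] with g hx hv
    rw [diagonalRep_tmul, hv]
    exact congrArg (· ⊗ₜ v) hx
  | add w w' hw hw' =>
    filter_upwards [hw, hw'] with g hgw hgw'
    rw [map_add, hgw, hgw']

end Tensor

section Galois

variable {K L W : Type*} [Field K] [Field L] [Algebra K L]

theorem isSmoothRep_ofDistribMulAction_gal [Algebra.IsAlgebraic K L] :
    IsSmoothRep (Representation.ofDistribMulAction K Gal(L/K) L) := fun x ↦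
  (stabilizer_isOpen_of_isIntegral (K := K) x).mem_nhds (one_mem _)

theorem exists_gal_apply_eq_algHom [Normal K L] (M : IntermediateField K L) (τ : M →ₐ[K] L) :
    ∃ g : Gal(L/K), ∀ x : M, g x = τ x :=
  ⟨.ofBijective (τ.liftNormal L) (Algebra.IsAlgebraic.algHom_bijective _), τ.liftNormal_commutes L⟩

variable [AddCommGroup W] [Module K W] {σ : Representation K Gal(L/K) W}

theorem apply_eq_apply_of_eqOn_intermediateField {M : IntermediateField K L} {w : W}
    (hw : ∀ g ∈ M.fixingSubgroup, σ g w = w) {g h : Gal(L/K)} (hgh : ∀ x : M, g x = h x) :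
    σ g w = σ h w := by
  have hmem : h⁻¹ * g ∈ M.fixingSubgroup := by
    rw [IntermediateField.mem_fixingSubgroup_iff]
    intro x hx
    rw [AlgEquiv.mul_apply, hgh ⟨x, hx⟩, ← AlgEquiv.mul_apply, inv_mul_cancel, AlgEquiv.one_apply]
  calc σ g w = σ (h * (h⁻¹ * g)) w := by rw [mul_inv_cancel_left]
    _ = σ h w := by rw [map_mul, Module.End.mul_apply, hw _ hmem]

namespace IsSemilinearRep

variable [Module L W]

theorem sum_algHom_smul_mem_invariants (hσ : IsSemilinearRep L σ) {M : IntermediateField K L}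
    [FiniteDimensional K M] {w : W} (hw : ∀ g ∈ M.fixingSubgroup, σ g w = w)
    {lift : (M →ₐ[K] L) → Gal(L/K)} (hlift : ∀ τ (x : M), lift τ x = τ x) (x : M) :
    ∑ τ : M →ₐ[K] L, τ x • σ (lift τ) w ∈ σ.invariants := by
  intro h
  rw [map_sum]
  refine Fintype.sum_equiv (AlgEquiv.refl.arrowCongr h) _ _ fun τ ↦ ?_
  have lift_comp : σ (h * lift τ) w = σ (lift (AlgEquiv.refl.arrowCongr h τ)) w :=
    apply_eq_apply_of_eqOn_intermediateField hw fun y ↦ by simp [hlift]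
  rw [hσ, ← Module.End.mul_apply, ← map_mul, lift_comp]
  rfl

theorem span_invariants_eq_top [Normal K L] (hσ : IsSemilinearRep L σ) (hsmooth : IsSmoothRep σ) :
    Submodule.span L (σ.invariants : Set W) = ⊤ := by
  refine Submodule.eq_top_iff'.2 fun w ↦ ?_
  obtain ⟨M, hM, hfix⟩ := (krullTopology_mem_nhds_one_iff K L _).1 (hsmooth w)
  choose lift hlift using exists_gal_apply_eq_algHom M
  have embeddings_independent : LinearIndependent L fun (τ : M →ₐ[K] L) (x : M) ↦ τ x :=
    (linearIndependent_monoidHom M L).comp _ AlgHom.coe_monoidHom_injective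
  have lift_val : σ (lift M.val) w = w := by
    simpa using apply_eq_apply_of_eqOn_intermediateField hfix (h := 1) (hlift M.val)
  rw [← lift_val]
  refine Submodule.span_mono ?_ (mem_span_range_sum_smul_of_linearIndependent
    embeddings_independent (fun τ ↦ σ (lift τ) w) M.val)
  rintro _ ⟨x, rfl⟩
  exact hσ.sum_algHom_smul_mem_invariants hfix hlift x

theorem bijective_liftBaseChange_invariants [IsGalois K L] [IsScalarTower K L W]
    (hσ : IsSemilinearRep L σ) (hsmooth : IsSmoothRep σ) :
    Function.Bijective (σ.invariants.subtype.liftBaseChange L) := by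
  refine ⟨hσ.injective_liftBaseChange_invariants, ?_⟩
  rw [← LinearMap.range_eq_top, LinearMap.range_liftBaseChange, Submodule.range_subtype]
  exact hσ.span_invariants_eq_top hsmooth

end IsSemilinearRep

end Galois

universe u v

theorem galois_descent_modp_general
    {k E : Type*} {Es : Type u} {V : Type v} [CommRing k] [Field E] [Field Es]
    [Algebra E Es] [IsGalois E Es] [Algebra k E] [Algebra k Es] [IsScalarTower k E Es]
    [AddCommGroup V] [Module k V] [Module.Free k V]
    (ρ : (Es ≃ₐ[E] Es) →* (V ≃ₗ[k] V))
    (hcont : ∀ v : V, IsOpen {g : Es ≃ₐ[E] Es | ρ g v = v}) :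
    ∃ D : Submodule E (Es ⊗[k] V),
      (∀ w : Es ⊗[k] V,
          w ∈ D ↔ ∀ g : Es ≃ₐ[E] Es,
            TensorProduct.map ((g.toLinearMap).restrictScalars k) (ρ g).toLinearMap w = w) ∧
      Module.rank E D = Cardinal.lift.{u} (Module.rank k V) ∧
      ∃ α : (Es ⊗[E] D) →ₗ[Es] (Es ⊗[k] V),
        (∀ (x : Es) (y : D), α (x ⊗ₜ[E] y) = x • (y : Es ⊗[k] V)) ∧
        Function.Bijective α ∧
        ∀ (g : Es ≃ₐ[E] Es) (t : Es ⊗[E] D),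
          α (TensorProduct.map g.toLinearMap LinearMap.id t) =
            TensorProduct.map ((g.toLinearMap).restrictScalars k) (ρ g).toLinearMap (α t) := by
  let ρ' : Representation k (Es ≃ₐ[E] Es) V :=
    (LinearEquiv.automorphismGroup.toLinearMapMonoidHom).comp ρ
  have hρ' : IsSmoothRep ρ' := fun v ↦ (hcont v).mem_nhds (by simp)
  have hσ : IsSemilinearRep Es (diagonalRep E Es ρ') := isSemilinearRep_diagonalRep ρ'
  have hbij := hσ.bijective_liftBaseChange_invariants
    (isSmoothRep_ofDistribMulAction_gal.diagonalRep hρ')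
  refine ⟨(diagonalRep E Es ρ').invariants, fun w ↦ Iff.rfl, ?_,
    (diagonalRep E Es ρ').invariants.subtype.liftBaseChange Es, fun x y ↦ rfl, hbij,
    hσ.liftBaseChange_invariants_map⟩
  have : Module.Free E (diagonalRep E Es ρ').invariants :=
    Module.Free.of_divisionRing E (diagonalRep E Es ρ').invariants
  have := (algebraMap k E).domain_nontrivial
  have rank_eq := (LinearEquiv.ofBijective _ hbij).rank_eq
  rwa [Module.rank_baseChange, Module.rank_baseChange, Cardinal.lift_id'] at rank_eq

/-- Galois descent for mod `p` representations: if `E` is a field of characteristic `p` with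
separable closure `E^s` and absolute Galois group `G_E = Gal(E^s/E)` (with the Krull topology),
and `V` is a `d`-dimensional `𝔽_p`-representation of `G_E` that is continuous for the discrete
topology on `V` (all vector stabilizers are open), then `𝔻(V) := (E^s ⊗_{𝔽_p} V)^{G_E}` is an
`E`-vector space of dimension `d` and the natural `E^s`-linear map
`α_V : E^s ⊗_E 𝔻(V) → E^s ⊗_{𝔽_p} V`, `λ ⊗ x ↦ λ·x`, is a `G_E`-equivariant isomorphism,
where `G_E` acts on the source through the coefficients `E^s` alone and on the target
diagonally. -/
theorem galois_descent_modp
    (p : ℕ) [Fact p.Prime]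
    (E Es : Type*) [Field E] [Field Es] [Algebra E Es] [IsSepClosure E Es] [CharP E p]
    [Algebra (ZMod p) E] [Algebra (ZMod p) Es] [IsScalarTower (ZMod p) E Es]
    (V : Type*) [AddCommGroup V] [Module (ZMod p) V] [FiniteDimensional (ZMod p) V]
    (ρ : (Es ≃ₐ[E] Es) →* (V ≃ₗ[ZMod p] V))
    (hcont : ∀ v : V, IsOpen {g : Es ≃ₐ[E] Es | ρ g v = v}) :
    ∃ D : Submodule E (Es ⊗[ZMod p] V),
      -- `D` is the submodule of `G_E`-invariants for the diagonal action
      (∀ w : Es ⊗[ZMod p] V,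
          w ∈ D ↔ ∀ g : Es ≃ₐ[E] Es,
            TensorProduct.map ((g.toLinearMap).restrictScalars (ZMod p)) (ρ g).toLinearMap w
              = w) ∧
      -- `dim_E 𝔻(V) = d`
      Module.finrank E D = Module.finrank (ZMod p) V ∧
      -- the natural map `α_V` is a `G_E`-equivariant isomorphism
      ∃ α : (Es ⊗[E] D) →ₗ[Es] (Es ⊗[ZMod p] V),
        (∀ (x : Es) (y : D), α (x ⊗ₜ[E] y) = x • (y : Es ⊗[ZMod p] V)) ∧
        Function.Bijective α ∧
        ∀ (g : Es ≃ₐ[E] Es) (t : Es ⊗[E] D),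
          α (TensorProduct.map g.toLinearMap LinearMap.id t) =
            TensorProduct.map ((g.toLinearMap).restrictScalars (ZMod p)) (ρ g).toLinearMap
              (α t) := by
  have : IsGalois E Es := IsSepClosure.isGalois
  obtain ⟨D, hD, hrank, hα⟩ := galois_descent_modp_general ρ hcont
  exact ⟨D, hD, by simp only [Module.finrank, hrank, Cardinal.toNat_lift], hα⟩
end

section
/- Geo-arithmetical Riemann–Roch: for every full-rank lattice L in a finite-dimensional real inner product space E, h⁰(L) − h⁰(L^∨) = −log(covol(L)); equivalently Σ_{x∈L} e^{−π‖x‖²} = covol(L)^{−1} · Σ_{y∈L^∨} e^{−π‖y‖²}. -/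
open MeasureTheory

/-!
Poisson summation. The periodization `x ↦ ∑_{l ∈ L} f (x + l)` descends to the torus `E / L`, whose
characters are the `x ↦ e^{2πi⟪x, y⟫}` with `y ∈ L^∨`. Integrating over a fundamental domain and
unfolding the sum shows that its Fourier coefficient at `y` is `covol(L)⁻¹ 𝓕 f y`, so summing the
Fourier series at `0` gives `∑_{l ∈ L} f l = covol(L)⁻¹ ∑_{y ∈ L^∨} 𝓕 f y`. The Gaussian
`e^{-π‖x‖²}` is its own Fourier transform. A `ℤ`-basis of `L` identifies `E / L` with `(ℝ/ℤ)^n`,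
and the dual basis identifies `L^∨` with `ℤ^n`.
-/

section TorusFourierSeries

open scoped FourierTransform
open UnitAddTorus

variable {ι : Type*}

/-- The quotient map `ℝ^ι → (ℝ/ℤ)^ι`, through which `ℤ^ι`-periodic functions factor. -/
def unitAddTorusMk (ι : Type*) : C(ι → ℝ, UnitAddTorus ι) where
  toFun v i := (v i : UnitAddCircle)
  continuous_toFun := by fun_prop

lemma isQuotientMap_unitAddTorusMk : Topology.IsQuotientMap (unitAddTorusMk ι) :=
  (IsOpenQuotientMap.piMap fun _ => QuotientAddGroup.isOpenQuotientMap_mk).isQuotientMap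

lemma exists_eq_intCast_add_of_unitAddTorusMk_eq {v w : ι → ℝ}
    (h : unitAddTorusMk ι v = unitAddTorusMk ι w) :
    ∃ k : ι → ℤ, v = (fun i => (k i : ℝ)) + w := by
  have hcoord (i : ι) : ∃ n : ℤ, v i = n + w i := by
    have hsub : ((v i - w i : ℝ) : UnitAddCircle) = 0 := by
      rw [AddCircle.coe_sub, sub_eq_zero]
      exact congrFun h i
    obtain ⟨n, hn⟩ := (AddCircle.coe_eq_zero_iff 1).mp hsub
    exact ⟨n, by rw [← zsmul_one, hn, sub_add_cancel]⟩
  choose k hk using hcoord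
  exact ⟨k, funext hk⟩

lemma exists_continuousMap_unitAddTorus_of_periodic {X : Type*} [TopologicalSpace X]
    (g : C(ι → ℝ, X)) (hg : ∀ (k : ι → ℤ) (v : ι → ℝ), g ((fun i => (k i : ℝ)) + v) = g v) :
    ∃ G : C(UnitAddTorus ι, X), ∀ v, G (unitAddTorusMk ι v) = g v := by
  have hfactors : Function.FactorsThrough g (unitAddTorusMk ι) := by
    intro v w hvw
    obtain ⟨k, rfl⟩ := exists_eq_intCast_add_of_unitAddTorusMk_eq hvw
    exact hg k w
  exact ⟨isQuotientMap_unitAddTorusMk.lift g hfactors,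
    DFunLike.congr_fun (isQuotientMap_unitAddTorusMk.lift_comp g hfactors)⟩

variable [Fintype ι]

lemma mFourier_unitAddTorusMk (k : ι → ℤ) (v : ι → ℝ) :
    mFourier k (unitAddTorusMk ι v) = 𝐞 (∑ i, k i * v i) := by
  simp only [mFourier, unitAddTorusMk, ContinuousMap.coe_mk, fourier_coe_apply,
    Real.fourierChar_apply, ← Complex.exp_sum]
  congr 1
  push_cast
  rw [Finset.mul_sum, Finset.sum_mul]
  exact Finset.sum_congr rfl fun i _ => by ring

lemma mFourierCoeff_eq_setIntegral_Ico {V : Type*} [NormedAddCommGroup V] [NormedSpace ℂ V]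
    (G : UnitAddTorus ι → V) (k : ι → ℤ) :
    mFourierCoeff G k = ∫ v in Set.univ.pi fun _ : ι => Set.Ico (0 : ℝ) 1,
      𝐞 (-∑ i, k i * v i) • G (unitAddTorusMk ι v) := by
  have hcube : {v : ι → ℝ | ∀ i, v i ∈ Set.Ioc (0 : ℝ) (0 + 1)} =ᵐ[volume]
      Set.univ.pi fun _ : ι => Set.Ico (0 : ℝ) 1 := by
    have hIoc : {v : ι → ℝ | ∀ i, v i ∈ Set.Ioc (0 : ℝ) (0 + 1)} =
        Set.univ.pi fun _ : ι => Set.Ioc (0 : ℝ) 1 := by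
      ext; simp
    rw [hIoc]
    exact Measure.univ_pi_Ioc_ae_eq_Icc.trans Measure.univ_pi_Ico_ae_eq_Icc.symm
  rw [mFourierCoeff_eq_integral G k fun _ => 0, setIntegral_congr_set hcube]
  refine integral_congr_ae (.of_forall fun v => ?_)
  have hchar : mFourier (-k) (unitAddTorusMk ι v) = 𝐞 (-∑ i, k i * v i) := by
    simp [mFourier_unitAddTorusMk]
  exact congrArg (· • G (unitAddTorusMk ι v)) hchar

theorem hasSum_fourierSeries_of_intPeriodic {g : C(ι → ℝ, ℂ)}
    (hg : ∀ (k : ι → ℤ) (v : ι → ℝ), g ((fun i => (k i : ℝ)) + v) = g v)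
    (hsum : Summable fun k : ι → ℤ =>
      ∫ v in Set.univ.pi fun _ : ι => Set.Ico (0 : ℝ) 1, 𝐞 (-∑ i, k i * v i) • g v)
    (w : ι → ℝ) :
    HasSum (fun k : ι → ℤ =>
      (∫ v in Set.univ.pi fun _ : ι => Set.Ico (0 : ℝ) 1, 𝐞 (-∑ i, k i * v i) • g v) *
        𝐞 (∑ i, k i * w i)) (g w) := by
  obtain ⟨G, hG⟩ := exists_continuousMap_unitAddTorus_of_periodic g hg
  have hcoeff (k : ι → ℤ) : mFourierCoeff G k =
      ∫ v in Set.univ.pi fun _ : ι => Set.Ico (0 : ℝ) 1, 𝐞 (-∑ i, k i * v i) • g v := by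
    simp only [mFourierCoeff_eq_setIntegral_Ico, hG]
  simp only [← hcoeff] at hsum ⊢
  simpa only [hG, mFourier_unitAddTorusMk, smul_eq_mul] using
    hasSum_mFourier_series_apply_of_summable hsum (unitAddTorusMk ι w)

end TorusFourierSeries

section DualLattice

open scoped FourierTransform RealInnerProductSpace

variable {E : Type*} [NormedAddCommGroup E] [InnerProductSpace ℝ E]

/-- The dual lattice `L^∨` of the vectors having integral inner product with all of `L`. -/
noncomputable def dualLattice (L : Submodule ℤ E) : Submodule ℤ E :=
  LinearMap.BilinForm.dualSubmodule (innerₗ E) L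

lemma mem_dualLattice {L : Submodule ℤ E} {y : E} :
    y ∈ dualLattice L ↔ ∀ x ∈ L, ∃ n : ℤ, ⟪x, y⟫ = n := by
  simp only [dualLattice, LinearMap.BilinForm.mem_dualSubmodule, Submodule.mem_one,
    innerₗ_apply_apply, real_inner_comm y, eq_intCast, eq_comm]

lemma fourierChar_neg_inner_add_of_mem_dualLattice {L : Submodule ℤ E} {l y : E} (hl : l ∈ L)
    (hy : y ∈ dualLattice L) (x : E) : 𝐞 (-⟪l + x, y⟫) = 𝐞 (-⟪x, y⟫) := by
  obtain ⟨n, hn⟩ := mem_dualLattice.mp hy l hl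
  have hone : 𝐞 (-(n : ℝ)) = 1 := by
    ext
    simpa [Real.fourierChar_apply, mul_comm, mul_left_comm] using
      Complex.exp_int_mul_two_pi_mul_I (-n)
  rw [inner_add_left, hn, neg_add, AddChar.map_add_eq_mul, hone, one_mul]

lemma nondegenerate_innerₗ : (innerₗ E).Nondegenerate :=
  ⟨fun x hx => inner_self_eq_zero.mp (hx x), fun x hx => inner_self_eq_zero.mp (hx x)⟩

variable [FiniteDimensional ℝ E] {L : Submodule ℤ E} [DiscreteTopology L] [IsZLattice ℝ L]
  {ι : Type*} [Fintype ι]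

/-- The linear parametrization of `E` by real coordinates in a `ℤ`-basis of the lattice `L`. It maps
`ℤ^ι` onto `L`, and the unit cube onto the fundamental parallelepiped of the basis. -/
noncomputable def latticeParam (b : Module.Basis ι ℤ L) : (ι → ℝ) ≃L[ℝ] E :=
  (b.ofZLatticeBasis ℝ).equivFunL.symm

lemma latticeParam_apply (b : Module.Basis ι ℤ L) (v : ι → ℝ) :
    latticeParam b v = ∑ i, v i • (b i : E) :=
  ((b.ofZLatticeBasis ℝ).equivFun_symm_apply v).trans
    (by simp only [Module.Basis.ofZLatticeBasis_apply])

lemma latticeParam_intCast_mem (b : Module.Basis ι ℤ L) (k : ι → ℤ) :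
    latticeParam b (fun i => (k i : ℝ)) ∈ L := by
  simp only [latticeParam_apply, Int.cast_smul_eq_zsmul]
  exact sum_mem fun i _ => L.smul_mem _ (b i).2

lemma latticeParam_preimage_fundamentalDomain (b : Module.Basis ι ℤ L) :
    latticeParam b ⁻¹' ZSpan.fundamentalDomain (b.ofZLatticeBasis ℝ) =
      Set.univ.pi fun _ : ι => Set.Ico (0 : ℝ) 1 := by
  ext v
  have hrepr : (b.ofZLatticeBasis ℝ).repr (latticeParam b v) = v :=
    (b.ofZLatticeBasis ℝ).equivFun.apply_symm_apply v
  simp only [Set.mem_preimage, ZSpan.mem_fundamentalDomain, hrepr, Set.mem_univ_pi]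

section DualBasis

variable [DecidableEq ι]

/-- The basis of `E` dual, for the inner product, to a `ℤ`-basis of the lattice `L`. -/
noncomputable def latticeDualBasis (b : Module.Basis ι ℤ L) : Module.Basis ι ℝ E :=
  LinearMap.BilinForm.dualBasis (innerₗ E) nondegenerate_innerₗ (b.ofZLatticeBasis ℝ)

lemma inner_latticeDualBasis (b : Module.Basis ι ℤ L) (i j : ι) :
    ⟪(b i : E), latticeDualBasis b j⟫ = if i = j then 1 else 0 := by
  rw [real_inner_comm, ← b.ofZLatticeBasis_apply ℝ]
  exact LinearMap.BilinForm.apply_dualBasis_left nondegenerate_innerₗ _ j i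

lemma dualLattice_eq_span (b : Module.Basis ι ℤ L) :
    dualLattice L = Submodule.span ℤ (Set.range (latticeDualBasis b)) := by
  conv_lhs => rw [← b.ofZLatticeBasis_span ℝ]
  exact LinearMap.BilinForm.dualSubmodule_span_of_basis (R := ℤ) _ nondegenerate_innerₗ _

end DualBasis

instance discreteTopology_dualLattice : DiscreteTopology (dualLattice L) := by
  classical
  rw [dualLattice_eq_span (Module.Free.chooseBasis ℤ L)]
  infer_instance

/-- The identification of `L^∨` with `ℤ^ι` given by coordinates in the dual of a `ℤ`-basis of
`L`. -/
noncomputable def dualLatticeEquivFun [DecidableEq ι] (b : Module.Basis ι ℤ L) :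
    dualLattice L ≃ₗ[ℤ] (ι → ℤ) :=
  (LinearEquiv.ofEq _ _ (dualLattice_eq_span b)).trans
    ((latticeDualBasis b).restrictScalars ℤ).equivFun

lemma coe_dualLatticeEquivFun_symm [DecidableEq ι] (b : Module.Basis ι ℤ L) (k : ι → ℤ) :
    ((dualLatticeEquivFun b).symm k : E) = ∑ i, (k i : ℝ) • latticeDualBasis b i := by
  simp [dualLatticeEquivFun, Module.Basis.equivFun_symm_apply, Int.cast_smul_eq_zsmul]

lemma inner_latticeParam_dualLattice [DecidableEq ι] (b : Module.Basis ι ℤ L) (v : ι → ℝ)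
    (k : ι → ℤ) :
    ⟪latticeParam b v, ((dualLatticeEquivFun b).symm k : E)⟫ = ∑ i, k i * v i := by
  simp [latticeParam_apply, coe_dualLatticeEquivFun_symm, sum_inner, inner_sum,
    real_inner_smul_left, real_inner_smul_right, inner_latticeDualBasis, mul_comm]

end DualLattice

section FundamentalDomain

open scoped FourierTransform RealInnerProductSpace

variable {E : Type*} [NormedAddCommGroup E] [InnerProductSpace ℝ E] [FiniteDimensional ℝ E]
  [MeasurableSpace E] [BorelSpace E] {L : Submodule ℤ E}

local instance : MeasurableVAdd L E :=
  inferInstanceAs (MeasurableVAdd L.toAddSubgroup E)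

local instance : VAddInvariantMeasure L E volume :=
  inferInstanceAs (VAddInvariantMeasure L.toAddSubgroup E volume)

lemma setIntegral_fourierChar_smul_tsum_eq_fourier {V : Type*} [NormedAddCommGroup V]
    [NormedSpace ℂ V] [Countable L] {f : E → V} (hf : Integrable f) {D : Set E}
    (hD : IsAddFundamentalDomain L D) {y : E} (hy : y ∈ dualLattice L) :
    ∫ x in D, 𝐞 (-⟪x, y⟫) • ∑' l : L, f (x + l) = 𝓕 f y := by
  have hcharf : Integrable fun x => 𝐞 (-⟪x, y⟫) • f x :=
    (Real.fourierIntegral_convergent_iff y).mpr hf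
  have hterm (x : E) (l : L) : 𝐞 (-⟪l +ᵥ x, y⟫) • f (l +ᵥ x) = 𝐞 (-⟪x, y⟫) • f (x + l) := by
    rw [Submodule.vadd_def, vadd_eq_add, fourierChar_neg_inner_add_of_mem_dualLattice l.2 hy,
      add_comm]
  calc ∫ x in D, 𝐞 (-⟪x, y⟫) • ∑' l : L, f (x + l)
    _ = ∫ x in D, ∑' l : L, 𝐞 (-⟪l +ᵥ x, y⟫) • f (l +ᵥ x) := by
      simp only [hterm, tsum_const_smul']
    _ = ∑' l : L, ∫ x in D, 𝐞 (-⟪l +ᵥ x, y⟫) • f (l +ᵥ x) := by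
      refine integral_tsum (fun l => ?_) ?_
      · exact ((measurePreserving_vadd l volume).integrable_comp_of_integrable hcharf).1.restrict
      · rw [← hD.lintegral_eq_tsum'' fun x => ‖𝐞 (-⟪x, y⟫) • f x‖ₑ]
        exact hcharf.2.ne
    _ = ∫ x, 𝐞 (-⟪x, y⟫) • f x := (hD.integral_eq_tsum'' _ hcharf).symm
    _ = 𝓕 f y := (Real.fourier_eq f y).symm

variable [DiscreteTopology L] [IsZLattice ℝ L]

lemma map_latticeParam_volume {ι : Type*} [Fintype ι] (b : Module.Basis ι ℤ L) :
    Measure.map (latticeParam b) volume =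
      (ENNReal.ofReal (ZLattice.covolume L))⁻¹ • (volume : Measure E) := by
  ext s hs
  have himage : latticeParam b ⁻¹' s = (b.ofZLatticeBasis ℝ).equivFun '' s :=
    ((b.ofZLatticeBasis ℝ).equivFun.image_eq_preimage_symm s).symm
  rw [Measure.map_apply (latticeParam b).continuous.measurable hs, himage,
    ZLattice.volume_image_eq_volume_div_covolume' L b hs.nullMeasurableSet, Measure.smul_apply,
    smul_eq_mul, mul_comm, div_eq_mul_inv]

lemma setIntegral_comp_latticeParam {V : Type*} [NormedAddCommGroup V] [NormedSpace ℝ V]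
    {ι : Type*} [Fintype ι] (b : Module.Basis ι ℤ L) (f : E → V) :
    ∫ v in Set.univ.pi fun _ : ι => Set.Ico (0 : ℝ) 1, f (latticeParam b v) =
      (ZLattice.covolume L)⁻¹ • ∫ x in ZSpan.fundamentalDomain (b.ofZLatticeBasis ℝ), f x := by
  have hparam : MeasurableEmbedding (latticeParam b) :=
    (latticeParam b).toHomeomorph.measurableEmbedding
  rw [← latticeParam_preimage_fundamentalDomain b, ← hparam.setIntegral_map,
    map_latticeParam_volume, Measure.restrict_smul, integral_smul_measure, ENNReal.toReal_inv,
    ENNReal.toReal_ofReal (ZLattice.covolume_pos L volume).le]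

lemma setIntegral_fourierChar_smul_comp_latticeParam {V : Type*} [NormedAddCommGroup V]
    [NormedSpace ℂ V] {g : E → V} (hg : ∀ l ∈ L, ∀ x, g (l + x) = g x) {D : Set E}
    (hD : IsAddFundamentalDomain L D) {ι : Type*} [Fintype ι] [DecidableEq ι]
    (b : Module.Basis ι ℤ L) (k : ι → ℤ) :
    ∫ v in Set.univ.pi fun _ : ι => Set.Ico (0 : ℝ) 1,
        𝐞 (-∑ i, k i * v i) • g (latticeParam b v) =
      (ZLattice.covolume L)⁻¹ •
        ∫ x in D, 𝐞 (-⟪x, ((dualLatticeEquivFun b).symm k : E)⟫) • g x := by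
  set y := (dualLatticeEquivFun b).symm k
  have hinvariant (l : L) (x : E) :
      𝐞 (-⟪l +ᵥ x, (y : E)⟫) • g (l +ᵥ x) = 𝐞 (-⟪x, (y : E)⟫) • g x := by
    rw [Submodule.vadd_def, vadd_eq_add, fourierChar_neg_inner_add_of_mem_dualLattice l.2 y.2,
      hg l l.2]
  simp only [← inner_latticeParam_dualLattice b]
  rw [setIntegral_comp_latticeParam b fun x => 𝐞 (-⟪x, (y : E)⟫) • g x,
    (ZLattice.isAddFundamentalDomain b volume).setIntegral_eq hD hinvariant]

theorem hasSum_fourierSeries_of_latticePeriodic {g : C(E, ℂ)} (hg : ∀ l ∈ L, ∀ x, g (l + x) = g x)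
    {D : Set E} (hD : IsAddFundamentalDomain L D)
    (hsum : Summable fun y : dualLattice L => ∫ x in D, 𝐞 (-⟪x, (y : E)⟫) • g x) (x₀ : E) :
    HasSum (fun y : dualLattice L => ((ZLattice.covolume L)⁻¹ •
      ∫ x in D, 𝐞 (-⟪x, (y : E)⟫) • g x) * 𝐞 ⟪x₀, (y : E)⟫) (g x₀) := by
  classical
  let b := Module.Free.chooseBasis ℤ L
  let e := (dualLatticeEquivFun b).symm.toEquiv
  have hperiodic (k : Module.Free.ChooseBasisIndex ℤ L → ℤ) (v) :
      g (latticeParam b ((fun i => (k i : ℝ)) + v)) = g (latticeParam b v) := by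
    rw [map_add, hg _ (latticeParam_intCast_mem b k)]
  have hcoeff := setIntegral_fourierChar_smul_comp_latticeParam hg hD b
  have hseries := hasSum_fourierSeries_of_intPeriodic
    (g := g.comp (latticeParam b : C(_, E))) hperiodic
    (((e.summable_iff.mpr hsum).const_smul _).congr fun k => (hcoeff k).symm)
    ((latticeParam b).symm x₀)
  refine e.hasSum_iff.mp ?_
  convert! hseries using 1
  · funext k
    have hphase : ⟪x₀, (e k : E)⟫ = ∑ i, k i * (latticeParam b).symm x₀ i := by
      rw [← inner_latticeParam_dualLattice b, ContinuousLinearEquiv.apply_symm_apply]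
      rfl
    exact congrArg₂ (fun c t => c * (𝐞 t : ℂ)) (hcoeff k).symm hphase
  · simp

end FundamentalDomain

section PoissonSummation

open TopologicalSpace (Compacts)
open scoped FourierTransform RealInnerProductSpace

variable {E V : Type*} [NormedAddCommGroup E] [NormedAddCommGroup V]

/-- The `L`-periodic function `x ↦ ∑_{l ∈ L} f (x + l)`. The sum is taken in `C(E, V)`, so it is
`0` unless the translates of `f` are summable for the compact-open topology. -/
noncomputable def latticePeriodization (L : Submodule ℤ E) (f : C(E, V)) : C(E, V) :=
  ∑' l : L, f.comp (ContinuousMap.addRight (l : E))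

section Lattice

variable [NormedSpace ℝ E] [FiniteDimensional ℝ E] {L : Submodule ℤ E}

lemma latticePeriodization_apply [CompleteSpace V] {f : C(E, V)}
    (hf : ∀ K : Compacts E,
      Summable fun l : L => ‖(f.comp (ContinuousMap.addRight (l : E))).restrict K‖) (x : E) :
    latticePeriodization L f x = ∑' l : L, f (x + l) :=
  have := FiniteDimensional.proper_real E
  (ContinuousMap.tsum_apply (ContinuousMap.summable_of_locally_summable_norm hf) x).symm

lemma latticePeriodization_add_of_mem [CompleteSpace V] {f : C(E, V)}
    (hf : ∀ K : Compacts E,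
      Summable fun l : L => ‖(f.comp (ContinuousMap.addRight (l : E))).restrict K‖)
    {l : E} (hl : l ∈ L) (x : E) :
    latticePeriodization L f (l + x) = latticePeriodization L f x := by
  simp only [latticePeriodization_apply hf]
  rw [← (Equiv.addLeft (⟨l, hl⟩ : L)).tsum_eq fun m : L => f (x + m)]
  exact tsum_congr fun m => congrArg f (by simp only [Equiv.coe_addLeft, Submodule.coe_add]; abel)

lemma exists_compacts_forall_exists_sub_mem (L : Submodule ℤ E) [DiscreteTopology L]
    [IsZLattice ℝ L] : ∃ K : Compacts E, ∀ x : E, ∃ l : L, x - l ∈ K := by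
  have := FiniteDimensional.proper_real E
  let b := (Module.Free.chooseBasis ℤ L).ofZLatticeBasis ℝ
  let K : Compacts E :=
    ⟨closure (ZSpan.fundamentalDomain b), (ZSpan.fundamentalDomain_isBounded b).isCompact_closure⟩
  refine ⟨K, fun x => ⟨⟨ZSpan.floor b x, ?_⟩,
    subset_closure (ZSpan.fract_mem_fundamentalDomain b x)⟩⟩
  exact ((Module.Free.chooseBasis ℤ L).ofZLatticeBasis_span ℝ).le (ZSpan.floor b x).2

variable [DiscreteTopology L] [IsZLattice ℝ L]

lemma integrable_of_summable_norm_restrict_add_lattice [MeasurableSpace E] [BorelSpace E]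
    {f : C(E, V)} (hf : ∀ K : Compacts E,
      Summable fun l : L => ‖(f.comp (ContinuousMap.addRight (l : E))).restrict K‖)
    (μ : Measure E) [μ.IsAddHaarMeasure] : Integrable f μ := by
  obtain ⟨K, hK⟩ := exists_compacts_forall_exists_sub_mem L
  let translate (l : L) : Compacts E := K.map (· + (l : E)) (by fun_prop)
  have hmeasure (l : L) : μ.real (translate l) = μ.real K := by
    simp [translate, measureReal_def, Set.image_add_right]
  have hnorm (l : L) : ‖f.restrict (translate l)‖ ≤
      ‖(f.comp (ContinuousMap.addRight (l : E))).restrict K‖ := by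
    refine (ContinuousMap.norm_le _ (norm_nonneg _)).mpr ?_
    rintro ⟨_, x, hx, rfl⟩
    exact ((f.comp (ContinuousMap.addRight (l : E))).restrict K).norm_coe_le_norm ⟨x, hx⟩
  refine integrable_of_summable_norm_restrict (s := translate) ?_ ?_
  · refine ((hf K).mul_right (μ.real K)).of_nonneg_of_le (fun l => by positivity) fun l => ?_
    rw [hmeasure]
    gcongr
    exact hnorm l
  · refine Set.iUnion_eq_univ_iff.mpr fun x => ?_
    obtain ⟨l, hl⟩ := hK x
    exact ⟨l, x - l, hl, sub_add_cancel x _⟩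

end Lattice

variable [InnerProductSpace ℝ E] [FiniteDimensional ℝ E] [MeasurableSpace E] [BorelSpace E]
  {L : Submodule ℤ E} [DiscreteTopology L] [IsZLattice ℝ L]

theorem tsum_add_lattice_eq_tsum_fourier {f : C(E, ℂ)}
    (hf : ∀ K : Compacts E,
      Summable fun l : L => ‖(f.comp (ContinuousMap.addRight (l : E))).restrict K‖)
    (hsum : Summable fun y : dualLattice L => 𝓕 (f : E → ℂ) y) (x : E) :
    ∑' l : L, f (x + l) =
      (ZLattice.covolume L)⁻¹ • ∑' y : dualLattice L, 𝓕 (f : E → ℂ) y * (𝐞 ⟪x, (y : E)⟫ : ℂ) := by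
  let D := ZSpan.fundamentalDomain ((Module.Free.chooseBasis ℤ L).ofZLatticeBasis ℝ)
  have hD : IsAddFundamentalDomain L D := ZLattice.isAddFundamentalDomain _ volume
  have hcoeff (y : dualLattice L) :
      ∫ x in D, 𝐞 (-⟪x, (y : E)⟫) • latticePeriodization L f x = 𝓕 (f : E → ℂ) y := by
    simp only [latticePeriodization_apply hf]
    exact setIntegral_fourierChar_smul_tsum_eq_fourier
      (integrable_of_summable_norm_restrict_add_lattice hf volume) hD y.2
  have hseries := hasSum_fourierSeries_of_latticePeriodic
    (fun l hl => latticePeriodization_add_of_mem hf hl) hD (by simpa only [hcoeff] using hsum) x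
  simp only [hcoeff, smul_mul_assoc] at hseries
  rw [← latticePeriodization_apply hf, ← hseries.tsum_eq, tsum_const_smul'']

end PoissonSummation

section Gaussian

open TopologicalSpace (Compacts)
open scoped FourierTransform

variable {E : Type*} [NormedAddCommGroup E]

/-- The Gaussian `x ↦ e^{-a‖x‖²}`. -/
noncomputable def gaussianMap (E : Type*) [NormedAddCommGroup E] (a : ℂ) : C(E, ℂ) where
  toFun x := Complex.exp (-a * ‖x‖ ^ 2)
  continuous_toFun := by fun_prop

lemma norm_gaussianMap (a : ℂ) (x : E) : ‖gaussianMap E a x‖ = Real.exp (-a.re * ‖x‖ ^ 2) := by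
  rw [gaussianMap, ContinuousMap.coe_mk, Complex.norm_exp, ← Complex.ofReal_pow,
    Complex.re_mul_ofReal, Complex.neg_re]

lemma exp_neg_mul_sq_norm_add_le {c R : ℝ} (hc : 0 ≤ c) {x : E} (hx : ‖x‖ ≤ R) (l : E) :
    Real.exp (-c * ‖x + l‖ ^ 2) ≤ Real.exp (c * R ^ 2) * Real.exp (-(c / 2) * ‖l‖ ^ 2) := by
  have htriangle : ‖l‖ ≤ ‖x + l‖ + R := by
    linarith [norm_le_add_norm_add' x l]
  have hsquare : ‖l‖ ^ 2 ≤ 2 * (‖x + l‖ ^ 2 + R ^ 2) :=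
    (pow_le_pow_left₀ (norm_nonneg l) htriangle 2).trans add_sq_le
  rw [← Real.exp_add, Real.exp_le_exp]
  linarith [mul_le_mul_of_nonneg_left hsquare hc]

lemma exp_neg_mul_sq_le_inv_pow {c r : ℝ} (hc : 0 < c) (hr : 0 < r) (n : ℕ) :
    Real.exp (-c * r ^ 2) ≤ n.factorial / c ^ n * r⁻¹ ^ (2 * n) := by
  calc Real.exp (-c * r ^ 2) = (Real.exp (c * r ^ 2))⁻¹ := by rw [neg_mul, Real.exp_neg]
    _ ≤ ((c * r ^ 2) ^ n / n.factorial)⁻¹ :=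
      inv_anti₀ (by positivity) (Real.pow_div_factorial_le_exp _ (by positivity) n)
    _ = n.factorial / c ^ n * r⁻¹ ^ (2 * n) := by
      rw [inv_div, mul_pow, inv_pow, ← pow_mul]
      field_simp

section Summable

variable [NormedSpace ℝ E] [FiniteDimensional ℝ E] (L : Submodule ℤ E) [DiscreteTopology L]

lemma summable_exp_neg_mul_sq_norm_lattice {c : ℝ} (hc : 0 < c) :
    Summable fun x : L => Real.exp (-c * ‖(x : E)‖ ^ 2) := by
  let n := Module.finrank ℤ L + 1
  have hpow : Summable fun x : L => n.factorial / c ^ n * ‖x‖⁻¹ ^ (2 * n) :=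
    (ZLattice.summable_norm_pow_inv L (2 * n) (by lia)).mul_left _
  refine hpow.of_norm_bounded_eventually ((Set.finite_singleton (0 : L)).subset fun x hx => ?_)
  contrapose! hx
  have hnorm : 0 < ‖x‖ := norm_pos_iff.mpr hx
  simpa using exp_neg_mul_sq_le_inv_pow hc hnorm n

lemma summable_gaussianMap_lattice {a : ℂ} (ha : 0 < a.re) :
    Summable fun x : L => gaussianMap E a x := by
  refine .of_norm ?_
  simpa only [norm_gaussianMap] using summable_exp_neg_mul_sq_norm_lattice L ha

lemma summable_norm_restrict_gaussianMap_add_lattice {a : ℂ} (ha : 0 < a.re) (K : Compacts E) :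
    Summable fun l : L =>
      ‖((gaussianMap E a).comp (ContinuousMap.addRight (l : E))).restrict K‖ := by
  obtain ⟨R, hR⟩ := K.isCompact.isBounded.exists_norm_le
  refine ((summable_exp_neg_mul_sq_norm_lattice L (half_pos ha)).mul_left
    (Real.exp (a.re * R ^ 2))).of_nonneg_of_le (fun l => norm_nonneg _) fun l => ?_
  refine (ContinuousMap.norm_le _ (by positivity)).mpr fun x => ?_
  simpa only [ContinuousMap.restrict_apply, ContinuousMap.comp_apply, ContinuousMap.coe_addRight,
    norm_gaussianMap] using exp_neg_mul_sq_norm_add_le ha.le (hR x x.2) (l : E)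

end Summable

variable [InnerProductSpace ℝ E] [FiniteDimensional ℝ E] [MeasurableSpace E] [BorelSpace E]

lemma fourier_gaussianMap_pi_mul {a : ℂ} (ha : 0 < a.re) (y : E) :
    𝓕 (gaussianMap E (Real.pi * a) : E → ℂ) y =
      (1 / a) ^ (Module.finrank ℝ E / 2 : ℂ) * gaussianMap E (Real.pi / a) y := by
  have hpia : 0 < (Real.pi * a).re := by simpa [Real.pi_pos] using ha
  have ha0 : a ≠ 0 := fun h => by simp [h] at ha
  have hpi : (Real.pi : ℂ) ≠ 0 := Complex.ofReal_ne_zero.mpr Real.pi_ne_zero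
  refine (fourier_gaussian_innerProductSpace hpia y).trans ?_
  rw [gaussianMap, ContinuousMap.coe_mk]
  congr 2 <;> field_simp

variable (L : Submodule ℤ E) [DiscreteTopology L] [IsZLattice ℝ L]

theorem tsum_gaussianMap_lattice_eq {a : ℂ} (ha : 0 < a.re) :
    ∑' x : L, gaussianMap E (Real.pi * a) x =
      (ZLattice.covolume L)⁻¹ • ((1 / a) ^ (Module.finrank ℝ E / 2 : ℂ) *
        ∑' y : dualLattice L, gaussianMap E (Real.pi / a) y) := by
  have hpia : 0 < (Real.pi * a).re := by simpa [Real.pi_pos] using ha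
  have hpi_div : 0 < (Real.pi / a).re := by
    rw [div_eq_mul_inv, Complex.re_ofReal_mul, Complex.inv_re]
    have : 0 < Complex.normSq a := Complex.normSq_pos.mpr fun h => by simp [h] at ha
    positivity
  have hsum : Summable fun y : dualLattice L => 𝓕 (gaussianMap E (Real.pi * a) : E → ℂ) y := by
    simp only [fourier_gaussianMap_pi_mul ha]
    exact (summable_gaussianMap_lattice _ hpi_div).mul_left _
  have hpoisson := tsum_add_lattice_eq_tsum_fourier
    (summable_norm_restrict_gaussianMap_add_lattice L hpia) hsum 0
  simpa [fourier_gaussianMap_pi_mul ha, tsum_mul_left] using hpoisson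

theorem tsum_exp_neg_pi_mul_sq_norm_lattice_eq :
    ∑' x : L, Real.exp (-Real.pi * ‖(x : E)‖ ^ 2) =
      (ZLattice.covolume L)⁻¹ *
        ∑' y : dualLattice L, Real.exp (-Real.pi * ‖(y : E)‖ ^ 2) := by
  have htheta := tsum_gaussianMap_lattice_eq L (a := 1) (by simp)
  simp only [gaussianMap, ContinuousMap.coe_mk, mul_one, div_one, Complex.one_cpow, one_mul,
    Complex.real_smul] at htheta
  exact_mod_cast htheta

end Gaussian

/-- Geo-arithmetical Riemann–Roch (Poisson summation for lattices): for every full-rank lattice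
`L` in a finite-dimensional real inner product space `E`, with dual lattice `L^∨`,
`h⁰(L) − h⁰(L^∨) = −log covol(L)`, where `h⁰(M) = log Σ_{x∈M} e^{−π‖x‖²}`; equivalently
`Σ_{x∈L} e^{−π‖x‖²} = covol(L)⁻¹ · Σ_{y∈L^∨} e^{−π‖y‖²}`. -/
theorem geo_arithmetical_riemann_roch
    (E : Type*) [NormedAddCommGroup E] [InnerProductSpace ℝ E] [FiniteDimensional ℝ E]
    [MeasurableSpace E] [BorelSpace E]
    (L : Submodule ℤ E) [DiscreteTopology L] [IsZLattice ℝ L]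
    (Ldual : Submodule ℤ E)
    (hdual : ∀ y : E, y ∈ Ldual ↔ ∀ x ∈ L, ∃ n : ℤ, (inner ℝ x y : ℝ) = (n : ℝ)) :
    Real.log (∑' x : L, Real.exp (-Real.pi * ‖(x : E)‖ ^ 2)) -
        Real.log (∑' y : Ldual, Real.exp (-Real.pi * ‖(y : E)‖ ^ 2)) =
      -Real.log (ZLattice.covolume L volume) ∧
    (∑' x : L, Real.exp (-Real.pi * ‖(x : E)‖ ^ 2)) =
      (ZLattice.covolume L volume)⁻¹ * ∑' y : Ldual, Real.exp (-Real.pi * ‖(y : E)‖ ^ 2) := by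
  obtain rfl : Ldual = dualLattice L := by
    ext y
    exact (hdual y).trans mem_dualLattice.symm
  have hpoisson := tsum_exp_neg_pi_mul_sq_norm_lattice_eq L
  have hdual_pos : 0 < ∑' y : dualLattice L, Real.exp (-Real.pi * ‖(y : E)‖ ^ 2) :=
    (summable_exp_neg_mul_sq_norm_lattice _ Real.pi_pos).tsum_pos (fun _ => (Real.exp_pos _).le) 0
      (Real.exp_pos _)
  have hcovolume : ZLattice.covolume L ≠ 0 := ZLattice.covolume_ne_zero L volume
  refine ⟨?_, hpoisson⟩
  rw [hpoisson, Real.log_mul (inv_ne_zero hcovolume) hdual_pos.ne', Real.log_inv,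
    add_sub_cancel_right]
end

section
/- Let k be an algebraically closed field, d ≥ 1, and q ≥ 2 an integer. If A, B ∈ GL_d(k) satisfy B·A·B⁻¹ = A^q, then every eigenvalue of A is a root of unity. -/
/-!
Conjugate matrices have the same characteristic polynomial, so `x ↦ x ^ q` maps the finite set of
eigenvalues of `A` to itself. Hence the powers `λ, λ ^ q, λ ^ q ^ 2, …` of an eigenvalue `λ` repeat,
and since `λ` is invertible and `q ≥ 2`, a repetition makes `λ` a root of unity.
-/

theorem isOfFinOrder_of_mapsTo_pow {M : Type*} [Monoid M] {S : Set M} (hS : S.Finite) {q : ℕ}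
    (hq : 2 ≤ q) (hpow : Set.MapsTo (· ^ q) S S) {x : M} (hxS : x ∈ S) (hx : IsUnit x) :
    IsOfFinOrder x := by
  obtain ⟨u, rfl⟩ := hx
  rw [Units.isOfFinOrder_val]
  by_contra hu
  have iterate_injective : Function.Injective fun i : ℕ ↦ (u : M) ^ q ^ i := by
    intro i j hij
    have units_eq : u ^ q ^ i = u ^ q ^ j :=
      Units.ext <| by simpa only [Units.val_pow_eq_pow_val] using hij
    exact Nat.pow_right_injective hq (injective_pow_iff_not_isOfFinOrder.2 hu units_eq)
  have iterate_mem (i : ℕ) : (u : M) ^ q ^ i ∈ S := by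
    simpa only [pow_iterate] using hpow.iterate i hxS
  exact Set.infinite_of_injective_forall_mem iterate_injective iterate_mem hS

section Charpoly

variable {R n : Type*} [CommRing R] [Fintype n] [DecidableEq n]

theorem isRoot_charpoly_pow {A : Matrix n n R} {x : R} (hx : A.charpoly.IsRoot x) (m : ℕ) :
    (A ^ m).charpoly.IsRoot (x ^ m) := by
  rw [Polynomial.IsRoot, Matrix.eval_charpoly] at hx ⊢
  have sub_dvd : Matrix.scalar n x - A ∣ Matrix.scalar n (x ^ m) - A ^ m := by
    rw [map_pow]
    exact (Matrix.scalar_commute x (Commute.all x) A).sub_dvd_pow_sub_pow m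
  have det_dvd := map_dvd Matrix.detMonoidHom sub_dvd
  exact zero_dvd_iff.1 (hx ▸ det_dvd)

theorem isUnit_of_isRoot_charpoly {A : Matrix n n R} (hA : IsUnit A) {x : R}
    (hx : A.charpoly.IsRoot x) : IsUnit x := by
  have dvd_det : x ∣ A.det := by
    rw [Matrix.det_eq_sign_charpoly_coeff]
    exact hx.dvd_coeff_zero.mul_left _
  exact isUnit_of_dvd_unit dvd_det ((Matrix.isUnit_iff_isUnit_det A).1 hA)

theorem charpoly_pow_eq_of_conj_eq_pow {A B : GL n R} {q : ℕ} (h : B * A * B⁻¹ = A ^ q) :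
    ((A : Matrix n n R) ^ q).charpoly = (A : Matrix n n R).charpoly := by
  rw [← Units.val_pow_eq_pow_val, ← h, Units.val_mul, Units.val_mul, Matrix.coe_units_inv,
    Matrix.charpoly_units_conj]

theorem eigenvalue_isRootOfUnity_of_conj_pow_general [IsDomain R] {q : ℕ} (hq : 2 ≤ q)
    {A B : GL n R} (h : B * A * B⁻¹ = A ^ q) {lam : R}
    (hlam : (A : Matrix n n R).charpoly.IsRoot lam) : IsOfFinOrder lam := by
  have finite_roots : {x | (A : Matrix n n R).charpoly.IsRoot x}.Finite :=
    Polynomial.finite_setOfPred_isRoot (Matrix.charpoly_monic _).ne_zero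
  refine isOfFinOrder_of_mapsTo_pow finite_roots hq (fun x hx ↦ ?_) hlam
    (isUnit_of_isRoot_charpoly A.isUnit hlam)
  exact charpoly_pow_eq_of_conj_eq_pow h ▸ isRoot_charpoly_pow hx q

end Charpoly

/-- If `A, B ∈ GL_d(k)` over an algebraically closed field `k` satisfy `B·A·B⁻¹ = A^q` for some
integer `q ≥ 2`, then every eigenvalue of `A` (i.e. every root of its characteristic polynomial)
is a root of unity. -/
theorem eigenvalue_isRootOfUnity_of_conj_pow
    (k : Type*) [Field k] [IsAlgClosed k] (d : ℕ) (hd : 1 ≤ d) (q : ℕ) (hq : 2 ≤ q)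
    (A B : GL (Fin d) k) (h : B * A * B⁻¹ = A ^ q)
    (lam : k) (hlam : (Matrix.charpoly (A : Matrix (Fin d) (Fin d) k)).IsRoot lam) :
    ∃ N : ℕ, 0 < N ∧ lam ^ N = 1 := by
  exact isOfFinOrder_iff_pow_eq_one.1 (eigenvalue_isRootOfUnity_of_conj_pow_general hq h hlam)
end
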